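/- arXiv:2211.01422 — 2 statements merged into one kernel-verified Lean document; each statement's English description precedes it below -/
import Mathlib

section
/- Let c > 1 be a non-integer real number and m ≥ 2 an integer. Then for every positive integer H, the number of distinct words of length H occurring in the sequence (⌊n^c⌋ mod m)_{n≥0} is at least H²/4. -/
/-!
Call a sequence tempered of degree `K` if its `(K + 1)`-st difference decays like `1 / b` for a
weight `b` that grows to infinity slower than `n`; for `K < c < K + 1` the sequence `n ^ c` is such.
Van der Corput's inequality lowers the degree to zero, where Fejér's theorem applies, so the
exponential averages of a tempered sequence vanish. Non-trivial combinations of the differences of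
orders `0, …, K` are again tempered, so by Weyl's criterion these differences are jointly
equidistributed modulo `m`, while the higher ones tend to zero.

By Newton's formula every line, in particular `h ↦ (h + i + 1 / 2) / q`, is therefore followed
modulo `m` by some `H` consecutive terms of the sequence, whose integer parts form the staircase
`⌊(h + i) / q⌋`. The positions of the first two jumps distinguish `⌊H / 2⌋ * ⌈H / 2⌉ + 1`
staircase words of length `H`.
-/

open Filter Finset MeasureTheory Topology
open scoped FourierTransform RealInnerProductSpace fwdDiff

section CesaroMean

variable {E F : Type*} [NormedAddCommGroup E] [NormedSpace ℝ E] [NormedAddCommGroup F]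
  [NormedSpace ℝ F] {u v : ℕ → E} {a b : E}

/-- The averages `(u 0 + ⋯ + u (N - 1)) / N` of the sequence `u` tend to `a`. -/
def HasCesaroMean (u : ℕ → E) (a : E) : Prop :=
  Tendsto (fun N : ℕ ↦ (N : ℝ)⁻¹ • ∑ n ∈ range N, u n) atTop (𝓝 a)

lemma hasCesaroMean_of_tendsto (h : Tendsto u atTop (𝓝 a)) : HasCesaroMean u a :=
  h.cesaro_smul

lemma HasCesaroMean.add (hu : HasCesaroMean u a) (hv : HasCesaroMean v b) :
    HasCesaroMean (fun n ↦ u n + v n) (a + b) :=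
  (Tendsto.add hu hv).congr fun N ↦ by rw [sum_add_distrib, smul_add]

lemma HasCesaroMean.sub (hu : HasCesaroMean u a) (hv : HasCesaroMean v b) :
    HasCesaroMean (fun n ↦ u n - v n) (a - b) :=
  (Tendsto.sub hu hv).congr fun N ↦ by rw [sum_sub_distrib, smul_sub]

lemma HasCesaroMean.map (hu : HasCesaroMean u a) (L : E →L[ℝ] F) :
    HasCesaroMean (fun n ↦ L (u n)) (L a) :=
  ((L.continuous.tendsto a).comp hu).congr fun N ↦ by
    rw [Function.comp_apply, map_smul, map_sum]

lemma HasCesaroMean.sum {ι : Type*} {s : Finset ι} {u : ι → ℕ → E} {a : ι → E}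
    (h : ∀ i ∈ s, HasCesaroMean (u i) (a i)) :
    HasCesaroMean (fun n ↦ ∑ i ∈ s, u i n) (∑ i ∈ s, a i) :=
  (tendsto_finsetSum s h).congr fun N ↦ by rw [← smul_sum, sum_comm]

section Telescoping

variable {w : ℕ → ℝ} {C : ℝ}

lemma norm_sum_range_smul_sub_le (hw : Monotone w) (hw₀ : 0 ≤ w 0) (hu : ∀ n, ‖u n‖ ≤ C) (N : ℕ) :
    ‖∑ n ∈ range N, w n • (u (n + 1) - u n)‖ ≤ 2 * C * w N := by
  have hw_nonneg (n : ℕ) : 0 ≤ w n := hw₀.trans (hw n.zero_le)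
  have norm_smul_le {t : ℝ} (ht : 0 ≤ t) (n : ℕ) : ‖t • u n‖ ≤ C * t := by
    rw [norm_smul, Real.norm_of_nonneg ht, mul_comm]
    exact mul_le_mul_of_nonneg_right (hu n) ht
  have boundary (N : ℕ) : ‖∑ n ∈ range N, w n • (u (n + 1) - u n) - w N • u N‖ ≤ C * w N := by
    induction N with
    | zero => simpa using norm_smul_le (hw_nonneg 0) 0
    | succ N ih =>
      have abel_step : ∑ n ∈ range (N + 1), w n • (u (n + 1) - u n) - w (N + 1) • u (N + 1) =
          (∑ n ∈ range N, w n • (u (n + 1) - u n) - w N • u N) -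
            (w (N + 1) - w N) • u (N + 1) := by
        rw [sum_range_succ, smul_sub, sub_smul]; abel
      rw [abel_step]
      calc _ ≤ C * w N + C * (w (N + 1) - w N) :=
            norm_sub_le_of_le ih (norm_smul_le (sub_nonneg.2 (hw N.le_succ)) _)
        _ = C * w (N + 1) := by ring
  calc _ ≤ C * w N + C * w N :=
        (norm_le_norm_sub_add _ _).trans
          (add_le_add (boundary N) (norm_smul_le (hw_nonneg N) N))
    _ = 2 * C * w N := by ring

lemma hasCesaroMean_smul_sub (hw : Monotone w) (hw₀ : 0 ≤ w 0)
    (hw_lin : Tendsto (fun n : ℕ ↦ w n / n) atTop (𝓝 0)) (hu : ∀ n, ‖u n‖ ≤ C) :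
    HasCesaroMean (fun n ↦ w n • (u (n + 1) - u n)) 0 := by
  have bound : Tendsto (fun N : ℕ ↦ 2 * C * (w N / N)) atTop (𝓝 0) := by
    simpa using hw_lin.const_mul (2 * C)
  refine squeeze_zero_norm (fun N ↦ ?_) bound
  rw [norm_smul, norm_inv, Real.norm_natCast, ← mul_div_assoc, inv_mul_eq_div]
  gcongr
  exact norm_sum_range_smul_sub_le hw hw₀ hu N

lemma hasCesaroMean_shift_sub (hu : ∀ n, ‖u n‖ ≤ C) (r : ℕ) :
    HasCesaroMean (fun n ↦ u (n + r) - u n) 0 := by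
  induction r with
  | zero => simpa using hasCesaroMean_of_tendsto (tendsto_const_nhds (x := (0 : E)))
  | succ r ih =>
    have step : HasCesaroMean (fun n ↦ u (n + 1 + r) - u (n + r)) 0 := by
      simpa using hasCesaroMean_smul_sub (w := fun _ ↦ 1) monotone_const zero_le_one
        (by simpa using tendsto_inv_atTop_nhds_zero_nat (𝕜 := ℝ)) fun n ↦ hu (n + r)
    convert step.add ih using 2 with n
    · rw [sub_add_sub_cancel, add_right_comm, add_assoc]
    · simp

lemma HasCesaroMean.comp_add_right (h : HasCesaroMean u a) (hu : ∀ n, ‖u n‖ ≤ C) (r : ℕ) :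
    HasCesaroMean (fun n ↦ u (n + r)) a := by
  simpa using h.add (hasCesaroMean_shift_sub hu r)

lemma hasCesaroMean_window_sub (hu : ∀ n, ‖u n‖ ≤ C) (R : ℕ) :
    HasCesaroMean (fun n ↦ ∑ r ∈ range R, u (n + r) - (R : ℝ) • u n) 0 := by
  convert HasCesaroMean.sum fun r (_ : r ∈ range R) ↦ hasCesaroMean_shift_sub hu r using 2
  · simp [Nat.cast_smul_eq_nsmul]
  · simp

end Telescoping

lemma norm_average_sq_le (u : ℕ → E) (N : ℕ) :
    ‖(N : ℝ)⁻¹ • ∑ n ∈ range N, u n‖ ^ 2 ≤ (N : ℝ)⁻¹ • ∑ n ∈ range N, ‖u n‖ ^ 2 := by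
  calc _ ≤ ((∑ n ∈ range N, ‖u n‖) / #(range N)) ^ 2 := by
        rw [norm_smul, norm_inv, Real.norm_natCast, inv_mul_eq_div, card_range]
        gcongr
        exact norm_sum_le _ _
    _ ≤ (∑ n ∈ range N, ‖u n‖ ^ 2) / #(range N) := sum_div_card_sq_le_sum_sq_div_card
    _ = _ := by rw [card_range, smul_eq_mul, inv_mul_eq_div]

end CesaroMean

section VanDerCorput

variable {E : Type*} [NormedAddCommGroup E] [InnerProductSpace ℝ E] {u : ℕ → E} {C : ℝ}

lemma norm_sum_sq_eq_sum_norm_sq_add_sum_offDiag {ι : Type*} (s : Finset ι)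
    (x : ι → E) :
    ‖∑ i ∈ s, x i‖ ^ 2 = ∑ i ∈ s, ‖x i‖ ^ 2 + ∑ p ∈ s.offDiag, ⟪x p.1, x p.2⟫ := by
  classical
  simp only [← real_inner_self_eq_norm_sq]
  rw [sum_inner]
  simp only [inner_sum]
  rw [← sum_product', ← diag_union_offDiag, sum_union (disjoint_diag_offDiag s), sum_diag]

lemma hasCesaroMean_inner_shift (hu : ∀ n, ‖u n‖ ≤ C)
    (h : ∀ k ≠ 0, HasCesaroMean (fun n ↦ ⟪u n, u (n + k)⟫) 0) {r s : ℕ} (hrs : r ≠ s) :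
    HasCesaroMean (fun n ↦ ⟪u (n + r), u (n + s)⟫) 0 := by
  wlog hlt : r < s generalizing r s
  · simpa only [real_inner_comm] using this hrs.symm (hrs.lt_or_gt.resolve_left hlt)
  obtain ⟨k, rfl⟩ := Nat.exists_eq_add_of_lt hlt
  have bounded (n : ℕ) : ‖⟪u n, u (n + (k + 1))⟫‖ ≤ C * C :=
    norm_inner_le_norm _ _ |>.trans <| mul_le_mul (hu _) (hu _) (norm_nonneg _)
      ((norm_nonneg _).trans (hu 0))
  simpa only [add_assoc, add_comm r] using
    (h (k + 1) k.succ_ne_zero).comp_add_right bounded r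

lemma eventually_average_norm_window_sq_le (hu : ∀ n, ‖u n‖ ≤ C)
    (h : ∀ k ≠ 0, HasCesaroMean (fun n ↦ ⟪u n, u (n + k)⟫) 0) (R : ℕ) :
    ∀ᶠ N : ℕ in atTop,
      (N : ℝ)⁻¹ • ∑ n ∈ range N, ‖∑ r ∈ range R, u (n + r)‖ ^ 2 ≤ R * C ^ 2 + 1 := by
  have offDiag_mean : HasCesaroMean
      (fun n ↦ ∑ p ∈ (range R).offDiag, ⟪u (n + p.1), u (n + p.2)⟫) 0 := by
    simpa using HasCesaroMean.sum fun p (hp : p ∈ (range R).offDiag) ↦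
      hasCesaroMean_inner_shift hu h (mem_offDiag.1 hp).2.2
  have window_le (n : ℕ) : ‖∑ r ∈ range R, u (n + r)‖ ^ 2 ≤
      R * C ^ 2 + ∑ p ∈ (range R).offDiag, ⟪u (n + p.1), u (n + p.2)⟫ := by
    rw [norm_sum_sq_eq_sum_norm_sq_add_sum_offDiag]
    gcongr
    calc _ ≤ ∑ r ∈ range R, C ^ 2 := by gcongr; exact hu _
      _ = R * C ^ 2 := by simp
  have majorant_mean := (hasCesaroMean_of_tendsto
    (tendsto_const_nhds (x := (R : ℝ) * C ^ 2))).add offDiag_mean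
  rw [add_zero] at majorant_mean
  filter_upwards [majorant_mean.eventually (gt_mem_nhds (lt_add_one _))] with N hN
  refine le_trans ?_ hN.le
  gcongr
  exact window_le _

lemma eventually_mul_norm_average_sq_le (hu : ∀ n, ‖u n‖ ≤ C)
    (h : ∀ k ≠ 0, HasCesaroMean (fun n ↦ ⟪u n, u (n + k)⟫) 0) {R : ℕ} (hR : R ≠ 0) :
    ∀ᶠ N : ℕ in atTop, R * ‖(N : ℝ)⁻¹ • ∑ n ∈ range N, u n‖ ^ 2 ≤ 2 * C ^ 2 + 4 := by
  have window_near := (hasCesaroMean_window_sub hu R).norm.eventually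
    (gt_mem_nhds (norm_zero.trans_lt one_pos))
  filter_upwards [eventually_average_norm_window_sq_le hu h R, window_near] with N hN hnear
  set M := (N : ℝ)⁻¹ • ∑ n ∈ range N, u n
  set V := (N : ℝ)⁻¹ • ∑ n ∈ range N, ∑ r ∈ range R, u (n + r)
  have hVM : ‖V - (R : ℝ) • M‖ < 1 := by
    rwa [sum_sub_distrib, ← smul_sum, smul_sub, smul_comm] at hnear
  have hV : ‖V‖ ^ 2 ≤ R * C ^ 2 + 1 := (norm_average_sq_le _ N).trans hN
  have hRM : R * ‖M‖ ≤ ‖V‖ + 1 := by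
    calc R * ‖M‖ = ‖(R : ℝ) • M‖ := by rw [norm_smul (R : ℝ) M, Real.norm_natCast]
      _ ≤ ‖V‖ + ‖V - (R : ℝ) • M‖ := norm_le_norm_add_norm_sub _ _
      _ ≤ ‖V‖ + 1 := by gcongr
  have hR1 : (1 : ℝ) ≤ R := by exact_mod_cast Nat.one_le_iff_ne_zero.2 hR
  refine le_of_mul_le_mul_left ?_ (zero_lt_one.trans_le hR1)
  calc (R : ℝ) * (R * ‖M‖ ^ 2) = (R * ‖M‖) ^ 2 := by ring
    _ ≤ (‖V‖ + 1) ^ 2 := by gcongr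
    _ ≤ 2 * (‖V‖ ^ 2 + 1 ^ 2) := add_sq_le
    _ ≤ R * (2 * C ^ 2 + 4) := by linarith

theorem hasCesaroMean_zero_of_correlations (hu : ∀ n, ‖u n‖ ≤ C)
    (h : ∀ k ≠ 0, HasCesaroMean (fun n ↦ ⟪u n, u (n + k)⟫) 0) : HasCesaroMean u 0 := by
  rw [HasCesaroMean, Metric.tendsto_nhds]
  intro ε hε
  obtain ⟨R, hR⟩ := exists_nat_gt ((2 * C ^ 2 + 4) / ε ^ 2)
  have hR_pos : (0 : ℝ) < R := lt_of_le_of_lt (by positivity) hR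
  filter_upwards [eventually_mul_norm_average_sq_le hu h (Nat.cast_ne_zero.1 hR_pos.ne')] with N hN
  rw [dist_zero_right]
  refine lt_of_pow_lt_pow_left₀ 2 hε.le (lt_of_mul_lt_mul_left (hN.trans_lt ?_) hR_pos.le)
  rwa [← div_lt_iff₀ (by positivity)]

end VanDerCorput

section Tempered

/-- Weights `b` increasing to infinity, slower than linearly and without jumps, such as `n ^ s` with
`0 < s < 1`. They measure the rate at which the differences of a sequence decay. -/
structure IsSublinearWeight (b : ℕ → ℝ) : Prop where
  monotone : Monotone b
  nonneg_zero : 0 ≤ b 0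
  tendsto_atTop : Tendsto b atTop atTop
  tendsto_div : Tendsto (fun n : ℕ ↦ b n / n) atTop (𝓝 0)
  tendsto_ratio : Tendsto (fun n ↦ b n / b (n + 1)) atTop (𝓝 1)

/-- Tempered sequences of degree `K`, a discrete analogue of Cigler's tempered functions: the
`(K + 1)`-st difference is asymptotic to a non-zero multiple of `1 / b` for a sublinear weight `b`.
For example `n ^ c` with `K < c < K + 1`. -/
def IsTempered (f : ℕ → ℝ) (K : ℕ) : Prop :=
  ∃ b : ℕ → ℝ, IsSublinearWeight b ∧
    ∃ A ≠ 0, Tendsto (fun n ↦ b n * Δ_[1] ^[K + 1] f n) atTop (𝓝 A)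

namespace IsSublinearWeight

variable {b s : ℕ → ℝ} {A : ℝ}

lemma tendsto_mul_comp_add_right (hb : IsSublinearWeight b)
    (hs : Tendsto (fun n ↦ b n * s n) atTop (𝓝 A)) (i : ℕ) :
    Tendsto (fun n ↦ b n * s (n + i)) atTop (𝓝 A) := by
  induction i with
  | zero => exact hs
  | succ i ih =>
    have shifted : Tendsto (fun n ↦ b n / b (n + 1) * (b (n + 1) * s (n + 1 + i))) atTop (𝓝 A) := by
      simpa using hb.tendsto_ratio.mul (ih.comp (tendsto_add_atTop_nat 1))
    refine shifted.congr' ?_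
    filter_upwards [(tendsto_add_atTop_nat 1).eventually (hb.tendsto_atTop.eventually_ne_atTop 0)]
      with n hn
    rw [← mul_assoc, div_mul_cancel₀ _ hn, add_right_comm, add_assoc]

lemma tendsto_zero (hb : IsSublinearWeight b) (hs : Tendsto (fun n ↦ b n * s n) atTop (𝓝 A)) :
    Tendsto s atTop (𝓝 0) := by
  refine (hs.div_atTop hb.tendsto_atTop).congr' ?_
  filter_upwards [hb.tendsto_atTop.eventually_ne_atTop 0] with n hn
  exact mul_div_cancel_left₀ _ hn

lemma tendsto_mul_fwdDiff_iter_add (hb : IsSublinearWeight b) {p : ℕ}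
    (hs : Tendsto (fun n ↦ b n * Δ_[1] ^[p] s n) atTop (𝓝 A)) {i : ℕ} (hi : i ≠ 0) :
    Tendsto (fun n ↦ b n * Δ_[1] ^[p + i] s n) atTop (𝓝 0) := by
  have fwdDiff_step {q : ℕ} {B : ℝ} (h : Tendsto (fun n ↦ b n * Δ_[1] ^[q] s n) atTop (𝓝 B)) :
      Tendsto (fun n ↦ b n * Δ_[1] ^[q + 1] s n) atTop (𝓝 0) := by
    simpa [Function.iterate_succ_apply', fwdDiff, mul_sub] using
      (hb.tendsto_mul_comp_add_right h 1).sub h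
  induction i with
  | zero => exact absurd rfl hi
  | succ i ih =>
    rcases eq_or_ne i 0 with rfl | hi'
    · exact fwdDiff_step hs
    · exact fwdDiff_step (ih hi')

lemma tendsto_smul_fourierChar_sub_one (hb : IsSublinearWeight b)
    (hs : Tendsto (fun n ↦ b n * s n) atTop (𝓝 A)) :
    Tendsto (fun n ↦ b n • ((𝐞 (s n) : ℂ) - 1)) atTop (𝓝 (A • (2 * Real.pi * Complex.I))) := by
  simpa using (Real.hasDerivAt_fourierChar 0).hasDerivWithinAt.hasFDerivWithinAt.lim
    (s := Set.univ) (hb.tendsto_zero hs) (by simp) hs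

/-- Fejér's theorem: `b • Δ u` has mean zero by partial summation, and it is asymptotic to a
multiple of `u = 𝐞 ∘ g`. -/
lemma hasCesaroMean_fourierChar (hb : IsSublinearWeight b) {g : ℕ → ℝ} (hA : A ≠ 0)
    (hg : Tendsto (fun n ↦ b n * Δ_[1] g n) atTop (𝓝 A)) :
    HasCesaroMean (fun n ↦ (𝐞 (g n) : ℂ)) 0 := by
  set B : ℂ := A • (2 * Real.pi * Complex.I)
  have hB : B ≠ 0 := smul_ne_zero hA Complex.two_pi_I_ne_zero
  have u_succ (n : ℕ) : (𝐞 (g (n + 1)) : ℂ) = 𝐞 (Δ_[1] g n) * 𝐞 (g n) := by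
    rw [← Circle.coe_mul, ← AddChar.map_add_eq_mul, fwdDiff, sub_add_cancel]
  have weighted_diff : HasCesaroMean (fun n ↦ b n • ((𝐞 (g (n + 1)) : ℂ) - 𝐞 (g n))) 0 :=
    hasCesaroMean_smul_sub (u := fun n ↦ (𝐞 (g n) : ℂ)) hb.monotone hb.nonneg_zero hb.tendsto_div
      fun n ↦ (Circle.norm_coe (𝐞 (g n))).le
  have asymptotic : Tendsto (fun n ↦ b n • ((𝐞 (g (n + 1)) : ℂ) - 𝐞 (g n)) - B * 𝐞 (g n))
      atTop (𝓝 0) := by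
    have factor := (hb.tendsto_smul_fourierChar_sub_one hg).sub_const B
    rw [sub_self, tendsto_zero_iff_norm_tendsto_zero] at factor
    refine tendsto_zero_iff_norm_tendsto_zero.2 (factor.congr fun n ↦ ?_)
    rw [u_succ, ← sub_one_mul, ← smul_mul_assoc, ← sub_mul, norm_mul, Circle.norm_coe, mul_one]
  simpa only [sub_sub_cancel, sub_zero, ContinuousLinearMap.mul_apply', inv_mul_cancel_left₀ hB,
    mul_zero] using (weighted_diff.sub (hasCesaroMean_of_tendsto asymptotic)).map
      (ContinuousLinearMap.mul ℝ ℂ B⁻¹)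

end IsSublinearWeight

lemma fwdDiff_comm {M G : Type*} [AddCommMonoid M] [AddCommGroup G] (h k : M) :
    Function.Commute (fwdDiff h : (M → G) → M → G) (fwdDiff k) := by
  intro f
  ext n
  simp only [fwdDiff, add_right_comm]
  abel

lemma fwdDiff_eq_sum_fwdDiff_one {G : Type*} [AddCommGroup G] (f : ℕ → G) (k n : ℕ) :
    Δ_[k] f n = ∑ i ∈ range k, Δ_[1] f (n + i) := by
  simp only [fwdDiff, add_assoc, sum_range_sub (fun i ↦ f (n + i)), add_zero]

lemma inner_fourierChar (x y : ℝ) : ⟪(𝐞 x : ℂ), 𝐞 y⟫ = (𝐞 (y - x) : ℂ).re := by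
  rw [Complex.inner, ← Circle.coe_inv_eq_conj, ← Circle.coe_mul, AddChar.map_sub_eq_div,
    div_eq_mul_inv]

namespace IsTempered

variable {f : ℕ → ℝ} {K : ℕ}

lemma fwdDiff (hf : IsTempered f (K + 1)) {k : ℕ} (hk : k ≠ 0) : IsTempered (Δ_[k] f) K := by
  obtain ⟨b, hb, A, hA, hlim⟩ := hf
  refine ⟨b, hb, k * A, mul_ne_zero (Nat.cast_ne_zero.2 hk) hA, ?_⟩
  have iter_fwdDiff (n : ℕ) :
      Δ_[1] ^[K + 1] (Δ_[k] f) n = ∑ i ∈ range k, Δ_[1] ^[K + 1 + 1] f (n + i) := by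
    rw [(fwdDiff_comm 1 k).iterate_left, fwdDiff_eq_sum_fwdDiff_one]
    simp only [Function.iterate_succ_apply' _ (K + 1)]
  simpa [iter_fwdDiff, mul_sum] using
    tendsto_finsetSum (range k) fun i _ ↦ hb.tendsto_mul_comp_add_right hlim i

theorem hasCesaroMean_fourierChar (hf : IsTempered f K) :
    HasCesaroMean (fun n ↦ (𝐞 (f n) : ℂ)) 0 := by
  induction K generalizing f with
  | zero =>
    obtain ⟨b, hb, A, hA, hlim⟩ := hf
    exact hb.hasCesaroMean_fourierChar hA hlim
  | succ K ih =>
    refine hasCesaroMean_zero_of_correlations (fun n ↦ (Circle.norm_coe _).le) fun k hk ↦ ?_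
    simpa only [inner_fourierChar, _root_.fwdDiff, Complex.reCLM_apply, Complex.zero_re] using
      (ih (hf.fwdDiff hk)).map Complex.reCLM

lemma tendsto_fwdDiff_iter_zero (hf : IsTempered f K) {j : ℕ} (hj : K < j) :
    Tendsto (Δ_[1] ^[j] f) atTop (𝓝 0) := by
  obtain ⟨b, hb, A, -, hlim⟩ := hf
  obtain ⟨i, rfl⟩ := Nat.exists_eq_add_of_lt hj
  rw [add_right_comm]
  rcases eq_or_ne i 0 with rfl | hi
  · exact hb.tendsto_zero hlim
  · exact hb.tendsto_zero (hb.tendsto_mul_fwdDiff_iter_add hlim hi)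

/-- The degree is lowered by the least index with a non-zero coefficient. -/
lemma exists_isTempered_sum (hf : IsTempered f K) {a : Fin (K + 1) → ℝ} (ha : a ≠ 0) :
    ∃ d, IsTempered (fun n ↦ ∑ j, a j * Δ_[1] ^[j] f n) d := by
  obtain ⟨b, hb, A, hA, hlim⟩ := hf
  obtain ⟨j₀, hj₀, hmin⟩ := WellFounded.has_min wellFounded_lt {j | a j ≠ 0}
    (Function.ne_iff.1 ha)
  refine ⟨K - j₀, b, hb, a j₀ * A, mul_ne_zero hj₀ hA, ?_⟩
  have iter_sum (n : ℕ) : b n * Δ_[1] ^[K - j₀ + 1] (fun n ↦ ∑ j, a j * Δ_[1] ^[j] f n) n =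
      ∑ j, a j * (b n * Δ_[1] ^[K - j₀ + 1 + j] f n) := by
    have sum_eq : (fun n ↦ ∑ j, a j * Δ_[1] ^[j] f n) = ∑ j, a j • Δ_[1] ^[j] f := by
      ext; simp
    simp_rw [sum_eq, fwdDiff_iter_finsetSum, fwdDiff_iter_const_smul,
      ← Function.iterate_add_apply, Finset.sum_apply, mul_sum, Pi.smul_apply, smul_eq_mul,
      mul_left_comm]
  have term_limit (j : Fin (K + 1)) :
      Tendsto (fun n ↦ a j * (b n * Δ_[1] ^[K - j₀ + 1 + j] f n)) atTop
        (𝓝 (if j = j₀ then a j₀ * A else 0)) := by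
    rcases lt_trichotomy j j₀ with hlt | rfl | hgt
    · simp [show a j = 0 from not_not.1 fun h ↦ hmin j h hlt, hlt.ne]
    · simpa [show K - j + 1 + j = K + 1 by omega] using hlim.const_mul (a j)
    · obtain ⟨i, hi⟩ := Nat.exists_eq_add_of_lt (Fin.lt_def.1 hgt)
      rw [if_neg hgt.ne', show K - j₀ + 1 + j = K + 1 + (i + 1) by omega]
      simpa using (hb.tendsto_mul_fwdDiff_iter_add hlim i.succ_ne_zero).const_mul (a j)
  simpa only [iter_sum, sum_ite_eq', mem_univ, if_true] using
    tendsto_finsetSum univ fun j _ ↦ term_limit j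

end IsTempered

end Tempered

section Equidistribution

variable {X : Type*} [TopologicalSpace X] [CompactSpace X]

lemma equicontinuous_average (p : ℕ → X) :
    Equicontinuous fun (N : ℕ) (F : C(X, ℂ)) ↦ (N : ℝ)⁻¹ • ∑ n ∈ range N, F (p n) := by
  refine (LipschitzWith.uniformEquicontinuous _ 1 fun N ↦
    LipschitzWith.mk_one fun F G ↦ ?_).equicontinuous
  rw [dist_eq_norm, dist_eq_norm, ← smul_sub, ← sum_sub_distrib, norm_smul, norm_inv,
    Real.norm_natCast, ← div_eq_inv_mul]
  refine div_le_of_le_mul₀ N.cast_nonneg (norm_nonneg _) ?_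
  calc _ ≤ ∑ _ ∈ range N, ‖F - G‖ := norm_sum_le_of_le _ fun n _ ↦ (F - G).norm_coe_le_norm (p n)
    _ = ‖F - G‖ * N := by rw [sum_const, card_range, nsmul_eq_mul, mul_comm]

variable [MeasurableSpace X] {μ : Measure X} {p : ℕ → X}

/-- The sequence `p` is equidistributed with respect to `μ`: time averages of continuous functions
along `p` converge to space averages. -/
def Equidistributed (p : ℕ → X) (μ : Measure X) : Prop :=
  ∀ F : C(X, ℂ), HasCesaroMean (fun n ↦ F (p n)) (∫ x, F x ∂μ)

variable [BorelSpace X]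

lemma continuous_integral_continuousMap (μ : Measure X) [IsFiniteMeasure μ] :
    Continuous fun F : C(X, ℂ) ↦ ∫ x, F x ∂μ :=
  (continuous_integral.comp (ContinuousMap.toLp 1 μ ℂ).continuous).congr fun F ↦
    integral_congr_ae (ContinuousMap.coeFn_toLp μ F)

theorem Equidistributed.of_span_dense [IsProbabilityMeasure μ] {S : Set C(X, ℂ)}
    (hS : (Submodule.span ℂ S).topologicalClosure = ⊤)
    (h : ∀ F ∈ S, HasCesaroMean (fun n ↦ F (p n)) (∫ x, F x ∂μ)) : Equidistributed p μ := by
  have integrable (F : C(X, ℂ)) : Integrable F μ :=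
    F.continuous.integrable_of_hasCompactSupport (.of_compactSpace _)
  have on_span : ∀ F ∈ Submodule.span ℂ S, HasCesaroMean (fun n ↦ F (p n)) (∫ x, F x ∂μ) := by
    intro F hF
    induction hF using Submodule.span_induction with
    | mem F hF => exact h F hF
    | zero => simpa using hasCesaroMean_of_tendsto (tendsto_const_nhds (x := (0 : ℂ)))
    | add F G _ _ hF hG => simpa [integral_add (integrable F) (integrable G)] using hF.add hG
    | smul a F _ hF =>
      simpa [integral_const_mul] using hF.map (ContinuousLinearMap.mul ℝ ℂ a)
  have closed : IsClosed {F : C(X, ℂ) | HasCesaroMean (fun n ↦ F (p n)) (∫ x, F x ∂μ)} :=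
    (equicontinuous_average p).isClosed_setOfPred_tendsto (continuous_integral_continuousMap μ)
  intro F
  exact closure_minimal on_span closed (hS.ge (Submodule.mem_top (x := F)))

theorem Equidistributed.frequently_mem [T2Space X] [IsFiniteMeasure μ] [μ.IsOpenPosMeasure]
    (h : Equidistributed p μ) {U : Set X} (hU : IsOpen U) (hne : U.Nonempty) :
    ∃ᶠ n in atTop, p n ∈ U := by
  intro hout
  obtain ⟨x, hx⟩ := hne
  obtain ⟨φ, hφ_out, hφ_x, hφ⟩ := exists_continuous_zero_one_of_isClosed hU.isClosed_compl
    isClosed_singleton (Set.disjoint_singleton_right.2 (not_not.2 hx))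
  have mean_zero : HasCesaroMean (fun n ↦ (φ (p n) : ℂ)) 0 := by
    refine hasCesaroMean_of_tendsto (tendsto_const_nhds.congr' ?_)
    filter_upwards [hout] with n hn
    rw [hφ_out hn, Pi.zero_apply, Complex.ofReal_zero]
  have mean_integral : HasCesaroMean (fun n ↦ (φ (p n) : ℂ)) (∫ x, φ x ∂μ : ℝ) := by
    rw [← integral_complex_ofReal]
    exact h ⟨fun x ↦ (φ x : ℂ), by fun_prop⟩
  have integral_pos : 0 < ∫ x, φ x ∂μ :=
    φ.continuous.integral_pos_of_hasCompactSupport_nonneg_nonzero (.of_compactSpace _)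
      (fun y ↦ (hφ y).1) (x := x) (by simp [hφ_x rfl])
  exact integral_pos.ne' (Complex.ofReal_eq_zero.1 (tendsto_nhds_unique mean_integral mean_zero))

end Equidistribution

section Torus

variable {ι : Type*} [Fintype ι]

/-- The Haar probability measure on the torus `(ℝ / ℤ) ^ ι`. -/
noncomputable abbrev torusHaar (ι : Type*) [Fintype ι] : Measure (UnitAddTorus ι) :=
  Measure.pi fun _ ↦ AddCircle.haarAddCircle

lemma integral_mFourier {k : ι → ℤ} (hk : k ≠ 0) :
    ∫ x, UnitAddTorus.mFourier k x ∂torusHaar ι = 0 := by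
  have orthogonal := (UnitAddTorus.orthonormal_mFourier (d := ι)).inner_eq_zero hk.symm
  rw [ContinuousMap.inner_toLp] at orthogonal
  simpa only [UnitAddTorus.mFourier_zero, ContinuousMap.one_apply, map_one, mul_one]
    using! orthogonal

lemma mFourier_coe (k : ι → ℤ) (y : ι → ℝ) :
    UnitAddTorus.mFourier k (fun j ↦ (y j : UnitAddCircle)) = 𝐞 (∑ j, k j * y j) := by
  simp only [UnitAddTorus.mFourier, ContinuousMap.coe_mk, fourier_coe_apply,
    Real.fourierChar_apply, ← Complex.exp_sum]
  congr 1
  push_cast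
  rw [Finset.mul_sum, Finset.sum_mul]
  exact Finset.sum_congr rfl fun j _ ↦ by ring

theorem equidistributed_torus_of_weyl {y : ℕ → ι → ℝ}
    (h : ∀ k : ι → ℤ, k ≠ 0 → HasCesaroMean (fun n ↦ (𝐞 (∑ j, k j * y n j) : ℂ)) 0) :
    Equidistributed (fun n j ↦ (y n j : UnitAddCircle)) (torusHaar ι) := by
  refine .of_span_dense (UnitAddTorus.span_mFourier_closure_eq_top (d := ι)) ?_
  rintro _ ⟨k, rfl⟩
  rcases eq_or_ne k 0 with rfl | hk
  · simpa [UnitAddTorus.mFourier_zero] using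
      hasCesaroMean_of_tendsto (tendsto_const_nhds (x := (1 : ℂ)))
  · simpa only [mFourier_coe, integral_mFourier hk] using h k hk

lemma Equidistributed.frequently_approx {y : ℕ → ι → ℝ}
    (h : Equidistributed (fun n j ↦ (y n j : UnitAddCircle)) (torusHaar ι)) (t : ι → ℝ) {ε : ℝ}
    (hε : 0 < ε) : ∃ᶠ n in atTop, ∀ j, ∃ z : ℤ, |y n j - t j - z| < ε := by
  refine (h.frequently_mem Metric.isOpen_ball ⟨fun j ↦ (t j : UnitAddCircle),
    Metric.mem_ball_self hε⟩).mono fun n hn j ↦ ⟨round (y n j - t j), ?_⟩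
  rw [← UnitAddCircle.norm_eq, AddCircle.coe_sub, ← dist_eq_norm]
  exact (dist_pi_lt_iff hε).1 hn j

end Torus

section Shadowing

lemma fwdDiff_iter_eq_zero_of_le {G : Type*} [AddCommGroup G] {P : ℕ → G} {p q : ℕ} (hpq : p ≤ q)
    (hP : Δ_[1] ^[p] P = 0) : Δ_[1] ^[q] P = 0 := by
  obtain ⟨i, rfl⟩ := Nat.exists_eq_add_of_le' hpq
  rw [Function.iterate_add_apply, hP]
  exact Function.iterate_fixed (fwdDiff_const 1 0) i

lemma abs_sum_choose_mul_le {x : ℕ → ℝ} {δ : ℝ} {h : ℕ} (hx : ∀ j ≤ h, |x j| ≤ δ) :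
    |∑ j ∈ range (h + 1), h.choose j * x j| ≤ 2 ^ h * δ := by
  calc _ ≤ ∑ j ∈ range (h + 1), |h.choose j * x j| := abs_sum_le_sum_abs _ _
    _ ≤ ∑ j ∈ range (h + 1), h.choose j * δ := by
        gcongr with j hj
        rw [abs_mul, Nat.abs_cast]
        gcongr
        exact hx j (mem_range_succ_iff.1 hj)
    _ = 2 ^ h * δ := by
        rw [← sum_mul]
        exact_mod_cast congrArg (fun t : ℕ ↦ (t : ℝ) * δ) h.sum_range_choose

lemma abs_sub_sub_lt_of_fwdDiff_iter {f P : ℕ → ℝ} {M ε : ℝ} (hε : 0 < ε) {n H : ℕ}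
    (hdiff : ∀ j < H, ∃ z : ℤ, |Δ_[1] ^[j] f n - Δ_[1] ^[j] P 0 - M * z| < ε / 2 ^ H) :
    ∀ h < H, ∃ z : ℤ, |f (n + h) - P h - M * z| < ε := by
  intro h hh
  choose! z hz using hdiff
  refine ⟨∑ j ∈ range (h + 1), h.choose j * z j, ?_⟩
  have newton : f (n + h) - P h - M * (∑ j ∈ range (h + 1), h.choose j * z j : ℤ) =
      ∑ j ∈ range (h + 1), h.choose j * (Δ_[1] ^[j] f n - Δ_[1] ^[j] P 0 - M * z j) := by
    have newton_f := shift_eq_sum_fwdDiff_iter 1 f h n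
    have newton_P := shift_eq_sum_fwdDiff_iter 1 P h 0
    simp only [smul_eq_mul, mul_one, zero_add, nsmul_eq_mul] at newton_f newton_P
    rw [newton_f, newton_P]
    push_cast
    rw [mul_sum, ← sum_sub_distrib, ← sum_sub_distrib]
    exact sum_congr rfl fun j _ ↦ by ring
  rw [newton]
  calc _ ≤ 2 ^ h * (ε / 2 ^ H) :=
        abs_sum_choose_mul_le fun j hj ↦ (hz j (hj.trans_lt hh)).le
    _ < 2 ^ H * (ε / 2 ^ H) := by gcongr; exact one_lt_two
    _ = ε := by field_simp

namespace IsTempered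

variable {f : ℕ → ℝ} {K : ℕ} {M ε : ℝ}

theorem equidistributed_fwdDiff_iter (hf : IsTempered f K) (hM : M ≠ 0) :
    Equidistributed (fun n (j : Fin (K + 1)) ↦ ((Δ_[1] ^[j] f n / M : ℝ) : UnitAddCircle))
      (torusHaar (Fin (K + 1))) := by
  refine equidistributed_torus_of_weyl fun k hk ↦ ?_
  have hkM : (fun j ↦ k j / M) ≠ 0 := by
    obtain ⟨j, hj⟩ := Function.ne_iff.1 hk
    exact Function.ne_iff.2 ⟨j, div_ne_zero (Int.cast_ne_zero.2 hj) hM⟩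
  obtain ⟨d, hd⟩ := hf.exists_isTempered_sum hkM
  simpa only [div_mul_eq_mul_div, mul_div_assoc] using hd.hasCesaroMean_fourierChar

lemma frequently_fwdDiff_iter_approx (hf : IsTempered f K) (hM : 0 < M) (t : ℕ → ℝ) (hε : 0 < ε) :
    ∃ᶠ n in atTop, ∀ j ≤ K, ∃ z : ℤ, |Δ_[1] ^[j] f n - t j - M * z| < ε := by
  refine ((hf.equidistributed_fwdDiff_iter hM.ne').frequently_approx (fun j ↦ t j / M)
    (div_pos hε hM)).mono fun n hn j hj ↦ ?_
  obtain ⟨z, hz⟩ := hn ⟨j, Nat.lt_succ_of_le hj⟩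
  refine ⟨z, ?_⟩
  rw [lt_div_iff₀ hM, ← abs_of_pos hM, ← abs_mul, abs_of_pos hM] at hz
  rwa [sub_mul, sub_mul, div_mul_cancel₀ _ hM.ne', div_mul_cancel₀ _ hM.ne', mul_comm _ M] at hz

theorem exists_shadow (hf : IsTempered f K) {P : ℕ → ℝ} (hP : Δ_[1] ^[K + 1] P = 0) (hM : 0 < M)
    (hε : 0 < ε) (H : ℕ) : ∃ n, ∀ h < H, ∃ z : ℤ, |f (n + h) - P h - M * z| < ε := by
  have hδ : 0 < ε / 2 ^ H := by positivity
  have high_small :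
      ∀ᶠ n in atTop, ∀ j ∈ (range H).filter (K < ·), |Δ_[1] ^[j] f n| < ε / 2 ^ H := by
    refine (eventually_all_finset _).2 fun j hj ↦ ?_
    exact (hf.tendsto_fwdDiff_iter_zero (mem_filter.1 hj).2).abs.eventually_lt_const
      (by rwa [abs_zero])
  obtain ⟨n, hlow, hhigh⟩ := ((hf.frequently_fwdDiff_iter_approx hM (fun j ↦ Δ_[1] ^[j] P 0)
    hδ).and_eventually high_small).exists
  refine ⟨n, abs_sub_sub_lt_of_fwdDiff_iter hε fun j hj ↦ ?_⟩
  rcases le_or_gt j K with hjK | hjK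
  · exact hlow j hjK
  · have high_P : Δ_[1] ^[j] P = 0 := fwdDiff_iter_eq_zero_of_le hjK hP
    exact ⟨0, by simpa [high_P] using hhigh j (by simp [hj, hjK])⟩

end IsTempered

lemma floor_eq_div_of_abs_sub_lt {x : ℝ} {a q : ℕ} (hq : q ≠ 0)
    (hx : |x - (a + 1 / 2) / q| < 1 / (2 * q)) : ⌊x⌋ = (a / q : ℕ) := by
  have hq' : (0 : ℝ) < q := Nat.cast_pos.2 (Nat.pos_of_ne_zero hq)
  obtain ⟨hlo, hhi⟩ : a / q < x ∧ x < (a + 1) / q := by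
    have left_end : (a + 1 / 2) / q - 1 / (2 * q) = (a / q : ℝ) := by field_simp; ring
    have right_end : (a + 1 / 2) / q + 1 / (2 * q) = ((a + 1) / q : ℝ) := by field_simp; ring
    rw [abs_lt] at hx
    constructor <;> linarith
  have div_le : ((a / q : ℕ) : ℝ) ≤ a / q := Nat.cast_div_le
  have le_div_add_one : ((a + 1) / q : ℝ) ≤ (a / q : ℕ) + 1 := by
    rw [div_le_iff₀' hq']
    exact_mod_cast Nat.lt_mul_div_succ a (Nat.pos_of_ne_zero hq)
  rw [Int.floor_eq_iff, Int.cast_natCast]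
  constructor <;> linarith

lemma fwdDiff_iter_two_affine (u v : ℝ) : Δ_[1] ^[2] (fun h : ℕ ↦ (h + u) / v) = 0 := by
  ext h
  simp only [Function.iterate_succ, Function.iterate_zero, Function.comp_apply, id, fwdDiff,
    Pi.zero_apply]
  push_cast
  ring

theorem IsTempered.exists_floor_eq_div {f : ℕ → ℝ} {K : ℕ} (hf : IsTempered f K) (hK : 1 ≤ K)
    {m : ℕ} (hm : m ≠ 0) {q : ℕ} (hq : q ≠ 0) (i H : ℕ) :
    ∃ n, ∀ h < H, (⌊f (n + h)⌋ : ZMod m) = ((h + i) / q : ℕ) := by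
  have hm' : (0 : ℝ) < m := Nat.cast_pos.2 (Nat.pos_of_ne_zero hm)
  have affine : Δ_[1] ^[K + 1] (fun h : ℕ ↦ (h + (i + 1 / 2)) / (q : ℝ)) = 0 :=
    fwdDiff_iter_eq_zero_of_le (Nat.succ_le_succ hK) (fwdDiff_iter_two_affine _ _)
  obtain ⟨n, hn⟩ := hf.exists_shadow affine hm' (ε := 1 / (2 * q)) (by positivity) H
  refine ⟨n, fun h hh ↦ ?_⟩
  obtain ⟨z, hz⟩ := hn h hh
  have floor_sub : ⌊f (n + h) - (m * z : ℤ)⌋ = ((h + i) / q : ℕ) := by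
    refine floor_eq_div_of_abs_sub_lt hq ?_
    push_cast
    rwa [sub_right_comm, add_assoc]
  rw [Int.floor_sub_intCast] at floor_sub
  rw [sub_eq_iff_eq_add.1 floor_sub, Int.cast_add, Int.cast_mul, Int.cast_natCast,
    Int.cast_natCast, ZMod.natCast_self, zero_mul, add_zero]

end Shadowing

section Powers

lemma exists_fwdDiff_iter_eq {D : ℕ → ℝ → ℝ} {x : ℝ} {p : ℕ}
    (hD : ∀ i < p, ∀ y ∈ Set.Icc x (x + p), HasDerivAt (D i) (D (i + 1) y) y) :
    ∃ ξ ∈ Set.Icc x (x + p), Δ_[1] ^[p] (D 0) x = D p ξ := by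
  induction p generalizing D with
  | zero => exact ⟨x, by simp, rfl⟩
  | succ p ih =>
    push_cast at hD ⊢
    have hD_diff : ∀ i < p, ∀ y ∈ Set.Icc x (x + p),
        HasDerivAt (Δ_[1] (D i)) (Δ_[1] (D (i + 1)) y) y := fun i hi y hy ↦
      ((hD i (by omega) (y + 1) ⟨by linarith [hy.1], by linarith [hy.2]⟩).comp_add_const y 1).sub
        (hD i (by omega) y ⟨hy.1, by linarith [hy.2]⟩)
    obtain ⟨ξ, hξ, hξ_eq⟩ := ih hD_diff
    have hD_top : ∀ y ∈ Set.Icc ξ (ξ + 1), HasDerivAt (D p) (D (p + 1) y) y := fun y hy ↦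
      hD p p.lt_succ_self y ⟨hξ.1.trans hy.1, by linarith [hy.2, hξ.2]⟩
    obtain ⟨η, hη, hη_eq⟩ := exists_hasDerivAt_eq_slope (D p) (D (p + 1)) (lt_add_one ξ)
      (fun y hy ↦ (hD_top y hy).continuousAt.continuousWithinAt)
      (fun y hy ↦ hD_top y (Set.Ioo_subset_Icc_self hy))
    refine ⟨η, ⟨hξ.1.trans hη.1.le, by linarith [hη.2, hξ.2]⟩, ?_⟩
    rw [Function.iterate_succ_apply, hξ_eq, hη_eq, fwdDiff, add_sub_cancel_left, div_one]

lemma hasDerivAt_prod_mul_rpow (c : ℝ) (i : ℕ) {x : ℝ} (hx : x ≠ 0) :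
    HasDerivAt (fun x : ℝ ↦ (∏ j ∈ range i, (c - j)) * x ^ (c - i))
      ((∏ j ∈ range (i + 1), (c - j)) * x ^ (c - (i + 1 : ℕ))) x := by
  rw [prod_range_succ, Nat.cast_add_one, ← sub_sub, mul_assoc]
  exact (Real.hasDerivAt_rpow_const (Or.inl hx)).const_mul _

lemma exists_fwdDiff_iter_rpow_eq (c : ℝ) (p : ℕ) {n : ℕ} (hn : n ≠ 0) :
    ∃ ξ ∈ Set.Icc (n : ℝ) (n + p),
      Δ_[1] ^[p] (fun k : ℕ ↦ (k : ℝ) ^ c) n = (∏ j ∈ range p, (c - j)) * ξ ^ (c - p) := by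
  have hn' : (0 : ℝ) < n := Nat.cast_pos.2 (Nat.pos_of_ne_zero hn)
  obtain ⟨ξ, hξ, hξ_eq⟩ := exists_fwdDiff_iter_eq (x := n) (p := p) fun i _ y hy ↦
    hasDerivAt_prod_mul_rpow c i (hn'.trans_le hy.1).ne'
  refine ⟨ξ, hξ, ?_⟩
  rw [← hξ_eq, fwdDiff_iter_eq_sum_shift, fwdDiff_iter_eq_sum_shift]
  simp

lemma tendsto_div_natCast_of_mem_Icc {ξ : ℕ → ℝ} {r : ℝ}
    (hξ : ∀ᶠ n : ℕ in atTop, ξ n ∈ Set.Icc (n : ℝ) (n + r)) :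
    Tendsto (fun n : ℕ ↦ ξ n / n) atTop (𝓝 1) := by
  have upper : Tendsto (fun n : ℕ ↦ 1 + r / (n : ℝ)) atTop (𝓝 1) := by
    simpa using (tendsto_const_div_atTop_nhds_zero_nat r).const_add 1
  refine tendsto_of_tendsto_of_tendsto_of_le_of_le' tendsto_const_nhds upper ?_ ?_
  all_goals
    filter_upwards [hξ, eventually_gt_atTop 0] with n hn hn_pos
    have hn' : (0 : ℝ) < n := Nat.cast_pos.2 hn_pos
  · exact (one_le_div hn').2 hn.1
  · rw [div_le_iff₀ hn', add_mul, one_mul, div_mul_cancel₀ _ hn'.ne']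
    exact hn.2

lemma tendsto_rpow_mul_fwdDiff_iter_rpow (c : ℝ) (p : ℕ) :
    Tendsto (fun n : ℕ ↦ (n : ℝ) ^ (p - c) * Δ_[1] ^[p] (fun k : ℕ ↦ (k : ℝ) ^ c) n) atTop
      (𝓝 (∏ j ∈ range p, (c - j))) := by
  choose! ξ hξ hξ_eq using fun n (hn : n ≠ 0) ↦ exists_fwdDiff_iter_rpow_eq c p hn
  have ratio : Tendsto (fun n : ℕ ↦ ξ n / n) atTop (𝓝 1) :=
    tendsto_div_natCast_of_mem_Icc ((eventually_ne_atTop 0).mono hξ)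
  have scaled : Tendsto (fun n : ℕ ↦ (∏ j ∈ range p, (c - j)) * (ξ n / n) ^ (c - p)) atTop
      (𝓝 (∏ j ∈ range p, (c - j))) := by
    simpa using (ratio.rpow_const (p := c - p) (Or.inl one_ne_zero)).const_mul _
  refine scaled.congr' ?_
  filter_upwards [eventually_ne_atTop 0] with n hn
  have hn' : (0 : ℝ) ≤ n := n.cast_nonneg
  rw [hξ_eq n hn, Real.div_rpow (hn'.trans (hξ n hn).1) hn', ← neg_sub c, Real.rpow_neg hn']
  ring

lemma isSublinearWeight_rpow {s : ℝ} (hs₀ : 0 < s) (hs₁ : s < 1) :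
    IsSublinearWeight fun n ↦ (n : ℝ) ^ s where
  monotone _ _ hab := by dsimp only; gcongr
  nonneg_zero := by positivity
  tendsto_atTop := (tendsto_rpow_atTop hs₀).comp tendsto_natCast_atTop_atTop
  tendsto_div := by
    refine ((tendsto_rpow_neg_atTop (sub_pos.2 hs₁)).comp
      (tendsto_natCast_atTop_atTop (R := ℝ))).congr' ?_
    filter_upwards [eventually_ne_atTop 0] with n hn
    rw [Function.comp_apply, neg_sub, Real.rpow_sub_one (Nat.cast_ne_zero.2 hn)]
  tendsto_ratio := by
    have succ_ratio : Tendsto (fun n : ℕ ↦ ((n : ℝ) + 1) / n) atTop (𝓝 1) :=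
      tendsto_div_natCast_of_mem_Icc (r := 1) (Eventually.of_forall fun n ↦ by simp)
    have inv_rpow := (succ_ratio.inv₀ one_ne_zero).rpow_const (p := s) (Or.inl (by simp))
    simp only [inv_one, Real.one_rpow, inv_div] at inv_rpow
    refine inv_rpow.congr fun n ↦ ?_
    rw [Real.div_rpow (by positivity) (by positivity), Nat.cast_succ]

theorem isTempered_rpow {c : ℝ} {K : ℕ} (hKc : K < c) (hcK : c < K + 1) :
    IsTempered (fun n ↦ (n : ℝ) ^ c) K := by
  refine ⟨fun n ↦ (n : ℝ) ^ ((K + 1 : ℕ) - c), isSublinearWeight_rpow ?_ ?_,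
    ∏ j ∈ range (K + 1), (c - j), prod_ne_zero_iff.2 fun j hj ↦ ?_,
    tendsto_rpow_mul_fwdDiff_iter_rpow c (K + 1)⟩
  · push_cast; linarith
  · push_cast; linarith
  · have hjK : (j : ℝ) ≤ K := Nat.cast_le.2 (mem_range_succ_iff.1 hj)
    exact (sub_pos.2 (hjK.trans_lt hKc)).ne'

lemma exists_isTempered_rpow {c : ℝ} (hc : 1 < c) (hci : ∀ z : ℤ, c ≠ z) :
    ∃ K ≥ 1, IsTempered (fun n ↦ (n : ℝ) ^ c) K :=
  ⟨⌊c⌋₊, Nat.le_floor (by exact_mod_cast hc.le),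
    isTempered_rpow ((Nat.floor_le (by linarith)).lt_of_ne' (hci ⌊c⌋₊)) (Nat.lt_floor_add_one c)⟩

end Powers

section Staircases

/-- The staircase with steps of length `a + i` whose first jumps are at `a` and `2 * a + i`, as a
sequence in a ring `R`. -/
def staircase (R : Type*) [NatCast R] (a i h : ℕ) : R := ((h + i) / (a + i) : ℕ)

/-- Parameters `(a, i)` of staircases with pairwise distinct words of length `H`: those whose first
two jumps are at most `H`, and `(H + 1, 0)` for the word without jumps. -/
def staircaseIndices (H : ℕ) : Finset (Σ _ : ℕ, ℕ) :=
  insert ⟨H + 1, 0⟩ ((Icc 1 (H / 2)).sigma fun a ↦ range (H + 1 - 2 * a))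

variable {R : Type*} [AddMonoidWithOne R] {a i h H : ℕ} {x : Σ _ : ℕ, ℕ}

lemma staircase_eq_zero (h₀ : h < a) : staircase R a i h = 0 := by
  rw [staircase, Nat.div_eq_of_lt (by omega), Nat.cast_zero]

lemma staircase_eq_one (h₁ : a ≤ h) (h₂ : h < 2 * a + i) : staircase R a i h = 1 := by
  rw [staircase, Nat.div_eq_of_lt_le (k := 1) (by omega) (by omega), Nat.cast_one]

lemma staircase_second_jump (ha : a ≠ 0) : staircase R a i (2 * a + i) = 1 + 1 := by
  rw [staircase, Nat.div_eq_of_lt_le (k := 2) (by omega) (by omega), Nat.cast_two,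
    one_add_one_eq_two]

lemma mem_staircaseIndices : x ∈ staircaseIndices H ↔
    x = ⟨H + 1, 0⟩ ∨ 1 ≤ x.1 ∧ 2 * x.1 + x.2 ≤ H := by
  simp only [staircaseIndices, mem_insert, mem_sigma, mem_Icc, mem_range]
  exact or_congr_right (by omega)

lemma sum_Icc_add_one_sub_two_mul {k : ℕ} (hk : 2 * k ≤ H) :
    ∑ a ∈ Icc 1 k, (H + 1 - 2 * a) = k * (H - k) := by
  induction k with
  | zero => simp
  | succ k ih =>
    obtain ⟨d, rfl⟩ := Nat.exists_eq_add_of_le hk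
    rw [sum_Icc_succ_top (by omega), ih (by omega),
      show 2 * (k + 1) + d - k = k + d + 2 by omega,
      show 2 * (k + 1) + d - (k + 1) = k + d + 1 by omega,
      show 2 * (k + 1) + d + 1 - 2 * (k + 1) = d + 1 by omega]
    ring

lemma card_staircaseIndices (H : ℕ) : #(staircaseIndices H) = H / 2 * (H - H / 2) + 1 := by
  have notMem :
      (⟨H + 1, 0⟩ : Σ _ : ℕ, ℕ) ∉ (Icc 1 (H / 2)).sigma fun a ↦ range (H + 1 - 2 * a) := by
    simp only [mem_sigma, mem_Icc]
    omega
  rw [staircaseIndices, card_insert_of_notMem notMem, card_sigma]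
  simp only [card_range]
  rw [sum_Icc_add_one_sub_two_mul (Nat.mul_div_le H 2)]

lemma sq_le_four_mul_card_staircaseIndices (H : ℕ) : H ^ 2 ≤ 4 * #(staircaseIndices H) := by
  rw [card_staircaseIndices]
  rcases Nat.even_or_odd' H with ⟨k, rfl | rfl⟩
  · rw [show 2 * k / 2 = k by omega, show 2 * k - k = k by omega]
    nlinarith
  · rw [show (2 * k + 1) / 2 = k by omega, show 2 * k + 1 - k = k + 1 by omega]
    nlinarith

end Staircases

section Words

variable {R : Type*} [Ring R] [Nontrivial R] {H : ℕ} {x y : Σ _ : ℕ, ℕ}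

lemma first_jump_le_of_staircase_eq (hx : x ∈ staircaseIndices H) (hy : y ∈ staircaseIndices H)
    (hxy : ∀ h < H, staircase R x.1 x.2 h = staircase R y.1 y.2 h) : y.1 ≤ x.1 := by
  by_contra! hlt
  rcases mem_staircaseIndices.1 hx with rfl | ⟨hx₁, hx₂⟩
  · rcases mem_staircaseIndices.1 hy with rfl | ⟨hy₁, hy₂⟩ <;> dsimp only at * <;> omega
  · have at_jump := hxy x.1 (by omega)
    rw [staircase_eq_one le_rfl (by omega), staircase_eq_zero hlt] at at_jump
    exact one_ne_zero at_jump

lemma second_jump_le_of_staircase_eq (hy : y ∈ staircaseIndices H)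
    (hxy : ∀ h < H, staircase R x.1 x.2 h = staircase R y.1 y.2 h) (hfst : x.1 = y.1) :
    y.2 ≤ x.2 := by
  by_contra! hlt
  rcases mem_staircaseIndices.1 hy with rfl | ⟨hy₁, hy₂⟩
  · exact Nat.not_lt_zero _ hlt
  · have at_jump := hxy (2 * x.1 + x.2) (by omega)
    rw [staircase_second_jump (by omega), staircase_eq_one (by omega) (by omega)] at at_jump
    exact one_ne_zero (add_eq_left.1 at_jump)

lemma injOn_staircase (H : ℕ) : Set.InjOn
    (fun (x : Σ _ : ℕ, ℕ) (h : Fin H) ↦ staircase R x.1 x.2 h) (staircaseIndices H) := by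
  intro x hx y hy hxy
  have hxy_lt : ∀ h < H, staircase R x.1 x.2 h = staircase R y.1 y.2 h := fun h hh ↦
    congrFun hxy ⟨h, hh⟩
  have hyx_lt : ∀ h < H, staircase R y.1 y.2 h = staircase R x.1 x.2 h := fun h hh ↦
    (hxy_lt h hh).symm
  have hfst : x.1 = y.1 := (first_jump_le_of_staircase_eq hy hx hyx_lt).antisymm
    (first_jump_le_of_staircase_eq hx hy hxy_lt)
  have hsnd : x.2 = y.2 := (second_jump_le_of_staircase_eq hx hyx_lt hfst.symm).antisymm
    (second_jump_le_of_staircase_eq hy hxy_lt hfst)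
  exact Sigma.ext hfst (heq_of_eq hsnd)

lemma sq_div_four_le_ncard_of_staircase_mem {W : Set (Fin H → R)} (hW : W.Finite)
    (h : ∀ x ∈ staircaseIndices H, (fun h : Fin H ↦ staircase R x.1 x.2 h) ∈ W) :
    (H : ℝ) ^ 2 / 4 ≤ W.ncard := by
  have card_le : #(staircaseIndices H) ≤ W.ncard := by
    rw [← Set.ncard_coe_finset]
    exact Set.ncard_le_ncard_of_injOn _ h (injOn_staircase H) hW
  rw [div_le_iff₀' four_pos]
  exact_mod_cast (sq_le_four_mul_card_staircaseIndices H).trans (Nat.mul_le_mul_left 4 card_le)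

end Words

theorem stmt_7_general {f : ℕ → ℝ} {K : ℕ} (hf : IsTempered f K) (hK : 1 ≤ K) {m : ℕ}
    (hm : 2 ≤ m) (H : ℕ) :
    (H : ℝ) ^ 2 / 4 ≤
      Set.ncard {w : Fin H → ZMod m | ∃ n : ℕ, ∀ h : Fin H, w h = (⌊f (n + h)⌋ : ZMod m)} := by
  have : NeZero m := ⟨by omega⟩
  have : Nontrivial (ZMod m) := ZMod.nontrivial_iff.2 (by omega)
  refine sq_div_four_le_ncard_of_staircase_mem (Set.toFinite _) fun x hx ↦ ?_
  have step_ne_zero : x.1 + x.2 ≠ 0 := by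
    rcases mem_staircaseIndices.1 hx with rfl | ⟨hx₁, -⟩
    · exact H.succ_ne_zero
    · omega
  obtain ⟨n, hn⟩ := hf.exists_floor_eq_div hK (NeZero.ne m) step_ne_zero x.2 H
  exact ⟨n, fun h ↦ (hn h h.2).symm⟩

theorem stmt_7 (c : ℝ) (hc : 1 < c) (hci : ∀ z : ℤ, c ≠ z)
    (m : ℕ) (hm : 2 ≤ m) (H : ℕ) (hH : 1 ≤ H) :
    ((H : ℝ) ^ 2) / 4 ≤
      (Set.ncard {w : Fin H → ZMod m |
        ∃ n : ℕ, ∀ h : Fin H, w h = ((⌊((n : ℝ) + h) ^ c⌋ : ℤ) : ZMod m)} : ℝ) := by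
  obtain ⟨K, hK, hf⟩ := exists_isTempered_rpow hc hci
  exact_mod_cast stmt_7_general hf hK hm H
end

section
/- Let c > 1 be a non-integer real number. There exist positive constants θ and δ (depending on c) such that for all N ≥ 1, all moduli 1 ≤ m ≤ N^θ and all residues 0 ≤ u < m, the count #{n ≤ N : ⌊n^c⌋ ≡ u (mod m)} equals N/m + O((N/m)^{1−δ}). -/
/-!
For a real number `X` and a residue `u` modulo `m`, the indicator of `⌊X⌋ ≡ u` is `1 / m` plus a
difference of two values of the sawtooth `ψ(x) = {x} - 1/2` at translates of `X / m`, so it suffices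
to bound `∑ n ≤ N, ψ(n ^ c / m - β)` uniformly in `β`. Instead of the Erdős–Turán inequality we use
`ψ ^ 2`: its Fourier coefficients decay like `1 / h ^ 2`, so its mean over the points `n ^ c / m` is
close to `1 / 12` for every `β` once the sums `∑ n ≤ N, e(h * n ^ c / m)` are small, and comparing
two nearby values of `β` recovers the mean of `ψ`, which is half the slope of `ψ ^ 2`.

For `k = ⌊c⌋`, applying van der Corput's inequality `k` times replaces the phase `α * n ^ c` by an
iterated difference of order `k`. Its increments behave like a multiple of `n ^ (c - k - 1)`: they
are small, positive and decreasing, so the Kusmin–Landau bound applies to the differenced sums.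
-/

open Filter Finset Real Topology
open scoped FourierTransform fwdDiff ComplexConjugate InnerProductSpace

/-! ### Exponential sums with monotone increments -/

lemma norm_one_sub_fourierChar (x : ℝ) : ‖1 - (𝐞 x : ℂ)‖ = 2 * |sin (π * x)| := by
  rw [norm_sub_rev, fourierChar_apply, mul_comm _ Complex.I,
    Complex.norm_exp_I_mul_ofReal_sub_one, norm_eq_abs, abs_mul, abs_two,
    show 2 * π * x / 2 = π * x by ring]

lemma four_mul_le_norm_one_sub_fourierChar {x : ℝ} (h0 : 0 ≤ x) (h1 : x ≤ 1 / 2) :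
    4 * x ≤ ‖1 - (𝐞 x : ℂ)‖ := by
  have hsin : 2 / π * (π * x) ≤ sin (π * x) := mul_le_sin (by positivity) (by nlinarith [pi_pos])
  rw [show 2 / π * (π * x) = 2 * x by field_simp] at hsin
  rw [norm_one_sub_fourierChar]
  linarith [le_abs_self (sin (π * x))]

lemma norm_fourierChar_sub_le (x y : ℝ) : ‖(𝐞 x : ℂ) - 𝐞 y‖ ≤ 2 * π * |x - y| := by
  have hfactor : (𝐞 x : ℂ) - 𝐞 y = -(𝐞 y * (1 - 𝐞 (x - y))) := by
    have hx : (𝐞 x : ℂ) = 𝐞 y * 𝐞 (x - y) := by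
      rw [← Circle.coe_mul, ← AddChar.map_add_eq_mul, add_sub_cancel]
    rw [hx]
    ring
  have hsin := abs_sin_le_abs (x := π * (x - y))
  rw [abs_mul, abs_of_pos pi_pos] at hsin
  rw [hfactor, norm_neg, norm_mul, Circle.norm_coe, one_mul, norm_one_sub_fourierChar]
  linarith

lemma norm_inv_one_sub_fourierChar_le {x : ℝ} (h0 : 0 < x) (h1 : x ≤ 1 / 2) :
    ‖(1 - (𝐞 x : ℂ))⁻¹‖ ≤ 1 / (4 * x) := by
  rw [norm_inv, ← one_div]
  exact one_div_le_one_div_of_le (by linarith) (four_mul_le_norm_one_sub_fourierChar h0.le h1)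

lemma one_sub_fourierChar_ne_zero {x : ℝ} (h0 : 0 < x) (h1 : x ≤ 1 / 2) :
    1 - (𝐞 x : ℂ) ≠ 0 :=
  norm_pos_iff.1 <| by linarith [four_mul_le_norm_one_sub_fourierChar h0.le h1]

lemma norm_inv_one_sub_fourierChar_sub_le {x y : ℝ} (hx : 0 < x) (hxy : x ≤ y)
    (hy : y ≤ 1 / 2) :
    ‖(1 - (𝐞 x : ℂ))⁻¹ - (1 - (𝐞 y : ℂ))⁻¹‖ ≤ 1 / 2 * (1 / x - 1 / y) := by
  have hy0 : 0 < y := hx.trans_le hxy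
  have hx1 : x ≤ 1 / 2 := hxy.trans hy
  rw [inv_sub_inv' (one_sub_fourierChar_ne_zero hx hx1) (one_sub_fourierChar_ne_zero hy0 hy),
    sub_sub_sub_cancel_left, norm_mul, norm_mul]
  calc _ ≤ 1 / (4 * x) * (2 * π * |x - y|) * (1 / (4 * y)) := by
        gcongr
        · exact norm_inv_one_sub_fourierChar_le hx hx1
        · exact norm_fourierChar_sub_le x y
        · exact norm_inv_one_sub_fourierChar_le hy0 hy
    _ = π / 8 * (1 / x - 1 / y) := by
        rw [abs_sub_comm, abs_of_nonneg (sub_nonneg.2 hxy)]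
        field_simp
        ring
    _ ≤ 1 / 2 * (1 / x - 1 / y) := by
        refine mul_le_mul_of_nonneg_right (by linarith [pi_lt_four]) ?_
        exact sub_nonneg.2 (one_div_le_one_div_of_le hx hxy)

lemma norm_sum_mul_sub_le {R : Type*} [SeminormedRing R] (g z : ℕ → R) (hz : ∀ n, ‖z n‖ ≤ 1)
    (b : ℕ) :
    ‖∑ n ∈ range b, g n * (z n - z (n + 1))‖ ≤
      ‖g 0‖ + ‖g b‖ + ∑ n ∈ range b, ‖g (n + 1) - g n‖ := by
  have hparts : ∑ n ∈ range b, g n * (z n - z (n + 1)) =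
      g 0 * z 0 - g b * z b + ∑ n ∈ range b, (g (n + 1) - g n) * z (n + 1) := by
    induction b with
    | zero => simp
    | succ b ih =>
      rw [sum_range_succ, sum_range_succ, ih]
      simp only [mul_sub, sub_mul]
      abel
  have hmul : ∀ (a : R) n, ‖a * z n‖ ≤ ‖a‖ := fun a n ↦
    (norm_mul_le _ _).trans (mul_le_of_le_one_right (norm_nonneg _) (hz n))
  rw [hparts]
  refine (norm_add_le _ _).trans (add_le_add ((norm_sub_le _ _).trans ?_) ?_)
  · exact add_le_add (hmul _ _) (hmul _ _)
  · exact norm_sum_le_of_le _ fun n _ ↦ hmul _ _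

theorem kusmin_landau {f : ℕ → ℝ} {b : ℕ} {lam : ℝ} (hlam : 0 < lam)
    (hge : ∀ n ≤ b, lam ≤ f (n + 1) - f n) (hle : ∀ n ≤ b, f (n + 1) - f n ≤ 1 / 2)
    (hanti : ∀ n < b, f (n + 2) - f (n + 1) ≤ f (n + 1) - f n) :
    ‖∑ n ∈ range b, (𝐞 (f n) : ℂ)‖ ≤ 1 / lam := by
  set d : ℕ → ℝ := fun n ↦ f (n + 1) - f n
  set g : ℕ → ℂ := fun n ↦ (1 - (𝐞 (d n) : ℂ))⁻¹
  have hpos : ∀ n ≤ b, 0 < d n := fun n hn ↦ hlam.trans_le (hge n hn)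
  have htel : ∀ n ∈ range b, (𝐞 (f n) : ℂ) = g n * (𝐞 (f n) - 𝐞 (f (n + 1))) := by
    intro n hn
    have hn := (mem_range.1 hn).le
    have hstep : (𝐞 (f (n + 1)) : ℂ) = 𝐞 (f n) * 𝐞 (d n) := by
      rw [← Circle.coe_mul, ← AddChar.map_add_eq_mul, add_sub_cancel]
    have := one_sub_fourierChar_ne_zero (hpos n hn) (hle n hn)
    simp only [g]
    rw [hstep]
    field_simp
  have hvar : ∑ n ∈ range b, ‖g (n + 1) - g n‖ ≤ 1 / 2 * (1 / d b - 1 / d 0) := by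
    rw [← sum_range_sub (fun n ↦ 1 / d n), mul_sum]
    refine sum_le_sum fun n hn ↦ ?_
    have hn := mem_range.1 hn
    exact norm_inv_one_sub_fourierChar_sub_le (hpos _ hn) (hanti n hn) (hle n hn.le)
  have hg : ∀ n ≤ b, ‖g n‖ ≤ 1 / 4 * (1 / d n) := fun n hn ↦ by
    rw [one_div_mul_one_div]
    exact norm_inv_one_sub_fourierChar_le (hpos n hn) (hle n hn)
  have h0 : 0 < 1 / d 0 := one_div_pos.2 (hpos 0 b.zero_le)
  have hb : 0 < 1 / d b := one_div_pos.2 (hpos b le_rfl)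
  rw [sum_congr rfl htel]
  calc _ ≤ ‖g 0‖ + ‖g b‖ + ∑ n ∈ range b, ‖g (n + 1) - g n‖ :=
        norm_sum_mul_sub_le g (fun n ↦ (𝐞 (f n) : ℂ)) (fun n ↦ (Circle.norm_coe _).le) b
    _ ≤ 1 / d b := by linarith [hg 0 b.zero_le, hg b le_rfl]
    _ ≤ 1 / lam := one_div_le_one_div_of_le hlam (hge b le_rfl)

/-! ### Van der Corput differencing -/

lemma sq_norm_sum_le_of_norm_inner_le {𝕜 E ι : Type*} [RCLike 𝕜] [SeminormedAddCommGroup E]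
    [InnerProductSpace 𝕜 E] {s : Finset ι} {v : ι → E} {A B : ℝ} (hB : 0 ≤ B)
    (hdiag : ∀ i ∈ s, ‖v i‖ ^ 2 ≤ A)
    (hoff : ∀ i ∈ s, ∀ j ∈ s, i ≠ j → ‖⟪v i, v j⟫_𝕜‖ ≤ B) :
    ‖∑ i ∈ s, v i‖ ^ 2 ≤ #s * A + (#s : ℝ) ^ 2 * B := by
  classical
  have hentry : ∀ i ∈ s, ∀ j ∈ s, ‖⟪v i, v j⟫_𝕜‖ ≤ (if i = j then A else 0) + B := by
    intro i hi j hj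
    split_ifs with hij
    · subst hij
      rw [inner_self_eq_norm_sq_to_K, norm_pow, RCLike.norm_ofReal, abs_norm]
      linarith [hdiag i hi]
    · linarith [hoff i hi j hj hij]
  calc ‖∑ i ∈ s, v i‖ ^ 2 = ‖∑ i ∈ s, ∑ j ∈ s, ⟪v i, v j⟫_𝕜‖ := by
        simp only [← inner_sum, ← sum_inner, inner_self_eq_norm_sq_to_K, norm_pow,
          RCLike.norm_ofReal, abs_norm]
    _ ≤ ∑ i ∈ s, ∑ j ∈ s, ((if i = j then A else 0) + B) :=
        norm_sum_le_of_le _ fun i hi ↦ norm_sum_le_of_le _ (hentry i hi)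
    _ = #s * A + (#s : ℝ) ^ 2 * B := by
        rw [sum_congr rfl fun i hi ↦ by
          rw [sum_add_distrib, sum_ite_eq, if_pos hi, sum_const]]
        simp only [sum_const, nsmul_eq_mul]
        ring

lemma sq_norm_sum_apply_le {𝕜 ι : Type*} [RCLike 𝕜] [Fintype ι]
    (v : EuclideanSpace 𝕜 ι) : ‖∑ i, v i‖ ^ 2 ≤ Fintype.card ι * ‖v‖ ^ 2 := by
  rw [EuclideanSpace.norm_sq_eq]
  exact (pow_le_pow_left₀ (norm_nonneg _) (norm_sum_le _ _) 2).trans sq_sum_le_card_mul_sum_sq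

/-- The vector of `ℂ ^ K` whose entries at `h, …, h + b - 1` are `z 0, …, z (b - 1)` and whose
other entries vanish. Van der Corput's inequality compares these translates for varying `h`. -/
noncomputable def shiftedBlock (z : ℕ → ℂ) (b K h : ℕ) : EuclideanSpace ℂ (Fin K) :=
  WithLp.toLp 2 fun m ↦ if h ≤ m ∧ m < b + h then z (m - h) else 0

lemma sum_shiftedBlock (z : ℕ → ℂ) {b K h : ℕ} (hK : b + h ≤ K) :
    ∑ m, shiftedBlock z b K h m = ∑ n ∈ range b, z n := by
  have hfilter : (range K).filter (fun m ↦ h ≤ m ∧ m < b + h) = Ico h (b + h) := by grind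
  calc ∑ m, shiftedBlock z b K h m =
        ∑ m ∈ range K, if h ≤ m ∧ m < b + h then z (m - h) else 0 :=
        Fin.sum_univ_eq_sum_range (fun m ↦ if h ≤ m ∧ m < b + h then z (m - h) else 0) K
    _ = ∑ n ∈ range b, z n := by
        rw [← sum_filter, hfilter, sum_Ico_eq_sum_range, Nat.add_sub_cancel]
        exact sum_congr rfl fun _ _ ↦ by rw [Nat.add_sub_cancel_left]

lemma inner_shiftedBlock (z : ℕ → ℂ) {b K h d : ℕ} (hK : b + h ≤ K) :
    ⟪shiftedBlock z b K (h + d), shiftedBlock z b K h⟫_ℂ =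
      ∑ n ∈ range (b - d), z (n + d) * conj (z n) := by
  have hfilter : (range K).filter (fun m ↦ h + d ≤ m ∧ m < b + h) = Ico (h + d) (b + h) := by grind
  calc _ = ∑ m ∈ range K,
        if h + d ≤ m ∧ m < b + h then z (m - h) * conj (z (m - (h + d))) else 0 := by
        rw [PiLp.inner_apply, ← Fin.sum_univ_eq_sum_range]
        refine sum_congr rfl fun m _ ↦ ?_
        simp only [shiftedBlock, RCLike.inner_apply]
        split_ifs <;> first | omega | simp
    _ = ∑ n ∈ range (b - d), z (n + d) * conj (z n) := by
        rw [← sum_filter, hfilter, sum_Ico_eq_sum_range, show b + h - (h + d) = b - d by omega]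
        refine sum_congr rfl fun n _ ↦ ?_
        rw [Nat.add_sub_cancel_left, show h + d + n - h = n + d by omega]

lemma sq_norm_shiftedBlock_le {z : ℕ → ℂ} (hz : ∀ n, ‖z n‖ ≤ 1) {b K h : ℕ} (hK : b + h ≤ K) :
    ‖shiftedBlock z b K h‖ ^ 2 ≤ b := by
  have hself := inner_shiftedBlock z (d := 0) hK
  rw [add_zero, Nat.sub_zero, inner_self_eq_norm_sq_to_K] at hself
  calc _ = ‖∑ n ∈ range b, z (n + 0) * conj (z n)‖ := by
        rw [← hself, norm_pow, RCLike.norm_ofReal, abs_norm]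
    _ ≤ ∑ _n ∈ range b, (1 : ℝ) := norm_sum_le_of_le _ fun _ _ ↦ by
        rw [norm_mul, RCLike.norm_conj]
        exact mul_le_one₀ (hz _) (norm_nonneg _) (hz _)
    _ = b := by simp

theorem van_der_corput {z : ℕ → ℂ} (hz : ∀ n, ‖z n‖ ≤ 1) {b H : ℕ} (hH : 0 < H) {B : ℝ}
    (hB0 : 0 ≤ B)
    (hB : ∀ d, 0 < d → d < H → ‖∑ n ∈ range (b - d), z (n + d) * conj (z n)‖ ≤ B) :
    ‖∑ n ∈ range b, z n‖ ^ 2 ≤ (b + H) * (b / H + B) := by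
  set v : ℕ → EuclideanSpace ℂ (Fin (b + H)) := shiftedBlock z b (b + H)
  have hsum : ∑ m, (∑ h ∈ range H, v h) m = H * ∑ n ∈ range b, z n := by
    simp only [WithLp.ofLp_sum, Finset.sum_apply]
    rw [sum_comm, sum_congr rfl fun h hh ↦
      sum_shiftedBlock z (Nat.add_le_add_left (mem_range.1 hh).le b)]
    simp
  have hlt : ∀ i < H, ∀ j < i, ‖⟪v i, v j⟫_ℂ‖ ≤ B := by
    intro i hi j hij
    obtain ⟨d, rfl⟩ := Nat.exists_eq_add_of_lt hij
    rw [add_assoc, inner_shiftedBlock z (by omega)]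
    exact hB _ (by omega) (by omega)
  have hgram : ‖∑ h ∈ range H, v h‖ ^ 2 ≤ H * b + (H : ℝ) ^ 2 * B := by
    have := sq_norm_sum_le_of_norm_inner_le (𝕜 := ℂ) (s := range H) (v := v) (A := b) hB0
      (fun h hh ↦ sq_norm_shiftedBlock_le hz (by have := mem_range.1 hh; omega))
      (fun i hi j hj hij ↦ by
        rw [mem_range] at hi hj
        rcases hij.lt_or_gt with hij | hij
        · rw [norm_inner_symm]
          exact hlt j hj i hij
        · exact hlt i hi j hij)
    simpa only [card_range] using this
  have hcauchy := sq_norm_sum_apply_le (∑ h ∈ range H, v h)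
  rw [hsum, norm_mul, Complex.norm_natCast, mul_pow, Fintype.card_fin] at hcauchy
  have hHpos : (0 : ℝ) < (H : ℝ) ^ 2 := by positivity
  refine le_of_mul_le_mul_left ?_ hHpos
  calc (H : ℝ) ^ 2 * ‖∑ n ∈ range b, z n‖ ^ 2
      ≤ (b + H : ℕ) * (H * b + (H : ℝ) ^ 2 * B) := hcauchy.trans (by gcongr)
    _ = (H : ℝ) ^ 2 * ((b + H) * (b / H + B)) := by
        push_cast
        field_simp

/-! ### Iterated differences -/

section IteratedDifferences

variable {M N G : Type*} [AddCommMonoid M] [AddCommMonoid N] [AddCommGroup G]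

/-- The iterated difference `Δ_[h₁] ⋯ Δ_[hₖ] f` for a list of steps `[h₁, …, hₖ]`. -/
def fwdDiffList (l : List M) (f : M → G) : M → G := l.foldr fwdDiff f

@[simp] lemma fwdDiffList_nil (f : M → G) : fwdDiffList [] f = f := rfl

lemma fwdDiffList_cons_apply (h : M) (l : List M) (f : M → G) (x : M) :
    fwdDiffList (h :: l) f x = fwdDiffList l f (x + h) - fwdDiffList l f x := rfl

lemma fwdDiffList_append_singleton (l : List M) (h : M) (f : M → G) :
    fwdDiffList (l ++ [h]) f = fwdDiffList l (Δ_[h] f) := by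
  simp [fwdDiffList]

lemma fwdDiffList_const_mul {R : Type*} [Ring R] (l : List M) (r : R) (f : M → R) (x : M) :
    fwdDiffList l (fun y ↦ r * f y) x = r * fwdDiffList l f x := by
  induction l generalizing x with
  | nil => rfl
  | cons h l ih => rw [fwdDiffList_cons_apply, fwdDiffList_cons_apply, ih, ih, mul_sub]

lemma fwdDiffList_comp_add_map (φ : N →+ M) (a : M) (l : List N) (f : M → G) (n : N) :
    fwdDiffList l (fun i ↦ f (a + φ i)) n = fwdDiffList (l.map φ) f (a + φ n) := by
  induction l generalizing n with
  | nil => rfl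
  | cons h l ih =>
    rw [List.map_cons, fwdDiffList_cons_apply, fwdDiffList_cons_apply, ih, ih, map_add, add_assoc]

end IteratedDifferences

theorem norm_sum_fourierChar_le_of_fwdDiffList {L H : ℕ} (hH : 0 < H) (hHL : H ≤ L) (j : ℕ)
    {f : ℕ → ℝ}
    (hf : ∀ l : List ℕ, l.length = j → (∀ d ∈ l, 0 < d ∧ d < H) → ∀ b ≤ L,
      ‖∑ n ∈ range b, (𝐞 (fwdDiffList l f n) : ℂ)‖ ≤ 4 * L / H) :
    ∀ b ≤ L, ‖∑ n ∈ range b, (𝐞 (f n) : ℂ)‖ ≤ 4 * L * (H : ℝ) ^ (-(1 / 2 : ℝ) ^ j) := by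
  induction j generalizing f with
  | zero =>
    intro b hb
    refine (hf [] rfl (by simp) b hb).trans_eq ?_
    rw [pow_zero, rpow_neg_one]
    rfl
  | succ j ih =>
    intro b hb
    set Y : ℝ := (H : ℝ) ^ (-(1 / 2 : ℝ) ^ j)
    have hH1 : (1 : ℝ) ≤ H := by exact_mod_cast hH
    have hcorr : ∀ d, 0 < d → d < H →
        ‖∑ n ∈ range (b - d), (𝐞 (f (n + d)) : ℂ) * conj (𝐞 (f n) : ℂ)‖ ≤ 4 * L * Y := by
      intro d hd hdH
      refine le_of_eq_of_le ?_ (ih (f := Δ_[d] f) (fun l hl hlH ↦ ?_) (b - d) (by omega))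
      · simp only [fwdDiff, AddChar.map_sub_eq_div, div_eq_mul_inv, Circle.coe_mul,
          Circle.coe_inv_eq_conj]
      · rw [← fwdDiffList_append_singleton]
        exact hf _ (by simp [hl]) (by simpa [or_imp, forall_and, hd, hdH] using hlH)
    have hY : 1 / (H : ℝ) ≤ Y := by
      rw [one_div, ← rpow_neg_one]
      exact rpow_le_rpow_of_exponent_le hH1
        (neg_le_neg (pow_le_one₀ (by norm_num) (by norm_num)))
    have hsqrt : ((H : ℝ) ^ (-(1 / 2 : ℝ) ^ (j + 1))) ^ 2 = Y := by
      rw [← rpow_mul_natCast (Nat.cast_nonneg H), pow_succ]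
      congr 1
      push_cast
      ring
    have hB0 : 0 ≤ 4 * L * Y := by positivity
    refine le_of_sq_le_sq ?_ (by positivity)
    calc _ ≤ (b + H) * (b / H + 4 * L * Y) :=
          van_der_corput (z := fun n ↦ (𝐞 (f n) : ℂ)) (fun n ↦ (Circle.norm_coe _).le) hH hB0 hcorr
      _ ≤ (L + L) * (L * Y + 4 * L * Y) := by
          rw [div_eq_mul_one_div]
          gcongr
      _ = 10 * (L ^ 2 * Y) := by ring
      _ ≤ 16 * (L ^ 2 * Y) := by gcongr; norm_num
      _ = _ := by rw [mul_pow, hsqrt]; ring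

/-! ### Iterated differences of powers -/

lemma hasDerivAt_fwdDiffList {t : List ℝ} (ht : ∀ h ∈ t, 0 ≤ h) {F F' : ℝ → ℝ} {a x : ℝ}
    (hF : ∀ y > a, HasDerivAt F (F' y) y) (hx : a < x) :
    HasDerivAt (fwdDiffList t F) (fwdDiffList t F' x) x := by
  induction t generalizing x with
  | nil => exact hF x hx
  | cons h t ih =>
    obtain ⟨hh, ht⟩ := List.forall_mem_cons.1 ht
    exact ((ih ht (by linarith)).comp_add_const x h).sub (ih ht hx)

theorem exists_fwdDiffList_eq_prod_mul {t : List ℝ} (ht : ∀ h ∈ t, 0 < h) {G : ℕ → ℝ → ℝ}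
    {a x : ℝ} (hG : ∀ i, ∀ y > a, HasDerivAt (G i) (G (i + 1) y) y) (hx : a < x) :
    ∃ y ∈ Set.Icc x (x + t.sum), fwdDiffList t (G 0) x = t.prod * G t.length y := by
  induction t generalizing G x with
  | nil => exact ⟨x, by simp, by simp⟩
  | cons h t ih =>
    obtain ⟨hh, ht⟩ := List.forall_mem_cons.1 ht
    have hderiv : ∀ y > a, HasDerivAt (fwdDiffList t (G 0)) (fwdDiffList t (G 1) y) y :=
      fun y hy ↦ hasDerivAt_fwdDiffList (fun h hh ↦ (ht h hh).le) (hG 0) hy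
    obtain ⟨z, ⟨hxz, hzh⟩, hz⟩ := exists_hasDerivAt_eq_slope (fwdDiffList t (G 0))
      (fwdDiffList t (G 1)) (lt_add_of_pos_right x hh)
      (fun y hy ↦ (hderiv y (hx.trans_le hy.1)).continuousAt.continuousWithinAt)
      (fun y hy ↦ hderiv y (hx.trans hy.1))
    obtain ⟨y, ⟨hzy, hyt⟩, hy⟩ := ih ht (G := fun i ↦ G (i + 1)) (fun i ↦ hG (i + 1))
      (hx.trans hxz)
    refine ⟨y, ⟨by linarith, by rw [List.sum_cons]; linarith⟩, ?_⟩
    rw [hz, add_sub_cancel_left, div_eq_iff hh.ne'] at hy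
    rw [fwdDiffList_cons_apply, hy, List.prod_cons, List.length_cons]
    ring

lemma exists_fwdDiffList_rpow_eq {t : List ℝ} (ht : ∀ h ∈ t, 0 < h) (s : ℝ) {x : ℝ}
    (hx : 0 < x) :
    ∃ y ∈ Set.Icc x (x + t.sum), fwdDiffList t (· ^ s) x =
      t.prod * ((descPochhammer ℝ t.length).eval s * y ^ (s - t.length)) := by
  have hG : ∀ i : ℕ, ∀ y > (0 : ℝ),
      HasDerivAt (fun y ↦ (descPochhammer ℝ i).eval s * y ^ (s - i))
        ((descPochhammer ℝ (i + 1)).eval s * y ^ (s - (i + 1 : ℕ))) y := by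
    intro i y hy
    refine ((hasDerivAt_rpow_const (.inl hy.ne')).const_mul _).congr_deriv ?_
    rw [descPochhammer_succ_eval, mul_assoc, Nat.cast_succ, sub_sub]
  simpa using exists_fwdDiffList_eq_prod_mul ht hG hx

lemma exists_fwdDiffList_mul_add_rpow_eq {l : List ℕ} (hl : ∀ d ∈ l, 0 < d) (c α : ℝ)
    {x₀ : ℝ} (hx₀ : 0 < x₀) (n : ℕ) :
    ∃ y ∈ Set.Icc (x₀ + n) (x₀ + n + l.sum), fwdDiffList l (fun i ↦ α * (x₀ + i) ^ c) n =
      α * (l.prod * ((descPochhammer ℝ l.length).eval c * y ^ (c - l.length))) := by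
  have hmap : ∀ h ∈ l.map (Nat.cast : ℕ → ℝ), 0 < h := by simpa using hl
  obtain ⟨y, hy, heq⟩ := exists_fwdDiffList_rpow_eq hmap c (x := x₀ + n) (by positivity)
  refine ⟨y, by simpa [Nat.cast_list_sum] using hy, ?_⟩
  have hcast : fwdDiffList l (fun i : ℕ ↦ (x₀ + i) ^ c) n =
      fwdDiffList (l.map (Nat.cast : ℕ → ℝ)) (· ^ c) (x₀ + n) :=
    fwdDiffList_comp_add_map (Nat.castAddMonoidHom ℝ) x₀ l (· ^ c) n
  rw [fwdDiffList_const_mul, hcast, heq, List.length_map, Nat.cast_list_prod]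

theorem norm_sum_fourierChar_fwdDiffList_rpow_le {c α x₀ X : ℝ} {l : List ℕ} (hα : 0 < α)
    (hx₀ : 0 < x₀) (hl : ∀ d ∈ l, 0 < d) (hlc : l.length < c) (hcl : c < l.length + 1)
    (hsmall : α * l.prod * (descPochhammer ℝ (l.length + 1)).eval c *
      x₀ ^ (c - (l.length + 1)) ≤ 1 / 2) {b : ℕ} (hX : x₀ + b + 1 + l.sum ≤ X) :
    ‖∑ n ∈ range b, (𝐞 (fwdDiffList l (fun i ↦ α * (x₀ + i) ^ c) n) : ℂ)‖ ≤
      1 / (α * (descPochhammer ℝ (l.length + 1)).eval c * X ^ (c - (l.length + 1))) := by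
  set P : ℝ := (descPochhammer ℝ (l.length + 1)).eval c
  have hP : 0 < P := descPochhammer_pos (by simpa using hlc)
  have hprod : (1 : ℝ) ≤ l.prod := by
    exact_mod_cast List.one_le_prod_of_one_le hl
  have hX₀ : 0 < X := lt_of_lt_of_le (by positivity) hX
  have hexp : c - (l.length + 1) ≤ 0 := by linarith
  have hl1 : ∀ d ∈ 1 :: l, 0 < d := List.forall_mem_cons.2 ⟨one_pos, hl⟩
  have hl2 : ∀ d ∈ 1 :: 1 :: l, 0 < d := List.forall_mem_cons.2 ⟨one_pos, hl1⟩
  set g := fwdDiffList l fun i : ℕ ↦ α * (x₀ + i) ^ c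
  have hfirst : ∀ n : ℕ, ∃ y ∈ Set.Icc (x₀ + n) (x₀ + n + (1 + l.sum)),
      g (n + 1) - g n = α * l.prod * P * y ^ (c - (l.length + 1)) := by
    intro n
    simpa [fwdDiffList_cons_apply, P, mul_assoc]
      using exists_fwdDiffList_mul_add_rpow_eq hl1 c α hx₀ n
  refine kusmin_landau ?_ (fun n hn ↦ ?_) (fun n _ ↦ ?_) fun n _ ↦ ?_
  · positivity
  · obtain ⟨y, ⟨hy1, hy2⟩, hy⟩ := hfirst n
    have hnb : (n : ℝ) ≤ b := by exact_mod_cast hn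
    have hy0 : 0 < y := by linarith [n.cast_nonneg (α := ℝ)]
    rw [hy]
    gcongr ?_ * P * ?_
    · exact le_mul_of_one_le_right hα.le hprod
    · exact rpow_le_rpow_of_nonpos hy0 (by linarith) hexp
  · obtain ⟨y, ⟨hy1, -⟩, hy⟩ := hfirst n
    rw [hy]
    refine le_trans ?_ hsmall
    gcongr ?_ * ?_
    exact rpow_le_rpow_of_nonpos hx₀ (by linarith [n.cast_nonneg (α := ℝ)]) hexp
  · obtain ⟨y, ⟨hy1, -⟩, hy⟩ := exists_fwdDiffList_mul_add_rpow_eq hl2 c α hx₀ n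
    have hy0 : 0 < y := by linarith [n.cast_nonneg (α := ℝ)]
    have hsecond : g (n + 2) - g (n + 1) - (g (n + 1) - g n) =
        α * (l.prod * (P * (c - (l.length + 1)) * y ^ (c - (l.length + 2)))) := by
      rw [← Nat.cast_succ, ← descPochhammer_succ_eval]
      simpa [fwdDiffList_cons_apply, add_assoc, one_add_one_eq_two] using hy
    rw [← sub_nonpos, hsecond]
    have := mul_nonpos_of_nonneg_of_nonpos
      (show 0 ≤ α * (l.prod * P * y ^ (c - (l.length + 2))) by positivity) hexp
    linarith

lemma norm_sum_fourierChar_mul_add_rpow_le {c α x₀ : ℝ} {k H L : ℕ} (hα : 0 < α)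
    (hx₀ : 0 < x₀) (hkc : k < c) (hck : c < k + 1) (hH : 0 < H) (hHL : H ≤ L)
    (hsmall : α * (H : ℝ) ^ k * (descPochhammer ℝ (k + 1)).eval c *
      x₀ ^ (c - (k + 1)) ≤ 1 / 2)
    (hlarge : 1 / (α * (descPochhammer ℝ (k + 1)).eval c *
      (x₀ + (k + 1) * L + 1) ^ (c - (k + 1))) ≤ 4 * L / H) {b : ℕ} (hb : b ≤ L) :
    ‖∑ n ∈ range b, (𝐞 (α * (x₀ + n) ^ c) : ℂ)‖ ≤
      4 * L * (H : ℝ) ^ (-(1 / 2 : ℝ) ^ k) := by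
  refine norm_sum_fourierChar_le_of_fwdDiffList hH hHL k (fun l hlk hlH b hb ↦ ?_) b hb
  subst hlk
  have hP : 0 ≤ (descPochhammer ℝ (l.length + 1)).eval c :=
    (descPochhammer_pos (by simpa using hkc)).le
  have hprod : (l.prod : ℝ) ≤ (H : ℝ) ^ l.length := by
    exact_mod_cast List.prod_le_pow_card l H fun d hd ↦ (hlH d hd).2.le
  have hsum : (l.sum : ℝ) ≤ l.length * L := by
    exact_mod_cast List.sum_le_card_nsmul l L fun d hd ↦ (hlH d hd).2.le.trans hHL
  have hbL : (b : ℝ) ≤ L := by exact_mod_cast hb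
  refine (norm_sum_fourierChar_fwdDiffList_rpow_le hα hx₀ (fun d hd ↦ (hlH d hd).1) hkc hck
    (hsmall.trans' ?_) ?_).trans hlarge
  · gcongr
  · linarith

lemma norm_sum_Icc_fourierChar_mul_rpow_le {c α : ℝ} {k H M N : ℕ} (hα : 0 < α)
    (hkc : k < c) (hck : c < k + 1) (hH : 0 < H) (hHN : H ≤ N) (hMN : M ≤ N)
    (hsmall : α * (H : ℝ) ^ k * (descPochhammer ℝ (k + 1)).eval c *
      (M + 1 : ℝ) ^ (c - (k + 1)) ≤ 1 / 2)
    (hlarge : 1 / (α * (descPochhammer ℝ (k + 1)).eval c *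
      ((k + 4) * N : ℝ) ^ (c - (k + 1))) ≤ 4 * N / H) :
    ‖∑ n ∈ Icc 1 N, (𝐞 (α * (n : ℝ) ^ c) : ℂ)‖ ≤
      M + 4 * N * (H : ℝ) ^ (-(1 / 2 : ℝ) ^ k) := by
  have hP : 0 < (descPochhammer ℝ (k + 1)).eval c := descPochhammer_pos (by simpa using hkc)
  have hN1 : (1 : ℝ) ≤ N := by exact_mod_cast hH.trans_le hHN
  have hMN' : (M : ℝ) ≤ N := by exact_mod_cast hMN
  rw [← Ico_add_one_right_eq_Icc, ← sum_Ico_consecutive _ (by omega : 1 ≤ M + 1) (by omega),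
    sum_Ico_eq_sum_range _ (M + 1), Nat.add_sub_add_right]
  refine (norm_add_le _ _).trans (add_le_add ?_ ?_)
  · exact (norm_sum_le_of_le _ fun _ _ ↦ (Circle.norm_coe _).le).trans_eq (by simp)
  · have htail := norm_sum_fourierChar_mul_add_rpow_le (x₀ := M + 1) hα (by positivity) hkc hck
      hH hHN hsmall (hlarge.trans' ?_) (N.sub_le M)
    · exact_mod_cast htail
    · gcongr 1 / (α * _ * ?_)
      exact rpow_le_rpow_of_nonpos (by positivity) (by linarith) (by linarith)

/-! ### Choice of parameters -/

lemma eventually_mul_natCast_rpow_le (K : ℝ) {s ε : ℝ} (hs : s < 0) (hε : 0 < ε) :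
    ∀ᶠ N : ℕ in atTop, K * (N : ℝ) ^ s ≤ ε := by
  have hlim : Tendsto (fun N : ℕ ↦ K * (N : ℝ) ^ s) atTop (𝓝 (K * 0)) := by
    have := (tendsto_rpow_neg_atTop (neg_pos.2 hs)).comp tendsto_natCast_atTop_atTop
    simpa [Function.comp_def] using this.const_mul K
  rw [mul_zero] at hlim
  exact hlim.eventually_le_const hε

lemma eventually_mul_pow_mul_rpow_le {θ e P : ℝ} {k : ℕ} (hP : 0 ≤ P) (he : e ≤ 0)
    (hθ : (k + 1) * θ + e / 2 < 0) :
    ∀ᶠ N : ℕ in atTop, ∀ α H x : ℝ, α ≤ (N : ℝ) ^ θ → 0 ≤ H → H ≤ (N : ℝ) ^ θ →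
      √N ≤ x → α * H ^ k * P * x ^ e ≤ 1 / 2 := by
  filter_upwards [eventually_mul_natCast_rpow_le P hθ one_half_pos, eventually_gt_atTop 0]
    with N hN hN0 α H x hαN hH hHN hx
  have hN0 : (0 : ℝ) < N := by exact_mod_cast hN0
  have hx0 : 0 < x := (sqrt_pos.2 hN0).trans_le hx
  calc _ ≤ (N : ℝ) ^ θ * ((N : ℝ) ^ θ) ^ k * P * √N ^ e := by
        gcongr ?_ * ?_ ^ k * P * ?_
        exact rpow_le_rpow_of_nonpos (sqrt_pos.2 hN0) hx he
    _ = P * (N : ℝ) ^ ((k + 1) * θ + e / 2) := by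
        rw [sqrt_eq_rpow, ← rpow_mul hN0.le, ← pow_succ', ← rpow_mul_natCast hN0.le,
          mul_right_comm, ← rpow_add hN0, mul_comm]
        push_cast
        ring_nf
    _ ≤ 1 / 2 := hN

lemma eventually_one_div_mul_rpow_le {θ e P K : ℝ} (hP : 0 < P) (hK : 0 < K)
    (hθ : 2 * θ - e - 1 < 0) :
    ∀ᶠ N : ℕ in atTop, ∀ α H : ℝ, (N : ℝ) ^ (-θ) ≤ α → 0 < H → H ≤ (N : ℝ) ^ θ →
      1 / (α * P * (K * N) ^ e) ≤ 4 * N / H := by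
  filter_upwards [eventually_mul_natCast_rpow_le (1 / (P * K ^ e)) hθ four_pos,
    eventually_gt_atTop 0] with N hN hN0 α H hα hH hHN
  have hN0 : (0 : ℝ) < N := by exact_mod_cast hN0
  calc _ ≤ 1 / ((N : ℝ) ^ (-θ) * P * (K * N) ^ e) := by gcongr
    _ = 1 / (P * K ^ e) * (N : ℝ) ^ (2 * θ - e - 1) * (N / (N : ℝ) ^ θ) := by
        rw [mul_rpow hK.le hN0.le, rpow_sub hN0, rpow_sub hN0, rpow_neg hN0.le, two_mul,
          rpow_add hN0, rpow_one]
        field_simp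
    _ ≤ 4 * (N / H) := by gcongr
    _ = 4 * N / H := (mul_div_assoc ..).symm

lemma natFloor_rpow_neg_le {y q : ℝ} (hy : 1 ≤ y) (hq0 : 0 ≤ q) (hq1 : q ≤ 1) :
    (⌊y⌋₊ : ℝ) ^ (-q) ≤ 2 * y ^ (-q) := by
  have hfloor : (1 : ℝ) ≤ ⌊y⌋₊ := by exact_mod_cast Nat.le_floor (by simpa using hy)
  have hhalf : y / 2 ≤ ⌊y⌋₊ := by linarith [Nat.lt_floor_add_one y]
  calc (⌊y⌋₊ : ℝ) ^ (-q) ≤ (y / 2) ^ (-q) :=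
        rpow_le_rpow_of_nonpos (by positivity) hhalf (by linarith)
    _ = 2 ^ q * y ^ (-q) := by
        rw [div_rpow (by positivity) two_pos.le, rpow_neg two_pos.le, div_inv_eq_mul, mul_comm]
    _ ≤ 2 ^ (1 : ℝ) * y ^ (-q) := by gcongr; norm_num
    _ = 2 * y ^ (-q) := by rw [rpow_one]

lemma natCeil_sqrt_le {N : ℕ} (hN : 1 ≤ N) : (⌈√(N : ℝ)⌉₊ : ℝ) ≤ 2 * √N := by
  have : 1 ≤ √(N : ℝ) := one_le_sqrt.2 (by exact_mod_cast hN)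
  linarith [Nat.ceil_lt_add_one (sqrt_nonneg (N : ℝ))]

lemma natCeil_sqrt_add_mul_natFloor_rpow_neg_le {N : ℕ} (hN : 1 ≤ N) {θ q : ℝ} (hθ : 0 ≤ θ)
    (hq0 : 0 ≤ q) (hq1 : q ≤ 1) (hθq : θ * q ≤ 1 / 2) :
    (⌈√(N : ℝ)⌉₊ : ℝ) + 4 * N * (⌊(N : ℝ) ^ θ⌋₊ : ℝ) ^ (-q) ≤ 10 * (N : ℝ) ^ (1 - θ * q) := by
  have hN1 : (1 : ℝ) ≤ N := by exact_mod_cast hN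
  have hN0 : (0 : ℝ) < N := by linarith
  have hsqrt : √(N : ℝ) ≤ (N : ℝ) ^ (1 - θ * q) := by
    rw [sqrt_eq_rpow]
    exact rpow_le_rpow_of_exponent_le hN1 (by linarith)
  have hfloor := natFloor_rpow_neg_le (one_le_rpow hN1 hθ) hq0 hq1
  calc _ ≤ 2 * (N : ℝ) ^ (1 - θ * q) + 4 * N * (2 * ((N : ℝ) ^ θ) ^ (-q)) := by
        gcongr
        exact (natCeil_sqrt_le hN).trans (by gcongr)
    _ = 10 * (N : ℝ) ^ (1 - θ * q) := by
        rw [← rpow_mul hN0.le, sub_eq_add_neg, rpow_add hN0, rpow_one, mul_neg]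
        ring

theorem eventually_norm_sum_Icc_fourierChar_mul_rpow_le {c θ : ℝ} {k : ℕ} (hkc : k < c)
    (hck : c < k + 1) (hθ : 0 < θ) (hθsmall : (k + 1) * θ + (c - (k + 1)) / 2 < 0)
    (hθlarge : 2 * θ - (c - (k + 1)) - 1 < 0) :
    ∀ᶠ N : ℕ in atTop, ∀ α : ℝ, (N : ℝ) ^ (-θ) ≤ α → α ≤ (N : ℝ) ^ θ →
      ‖∑ n ∈ Icc 1 N, (𝐞 (α * (n : ℝ) ^ c) : ℂ)‖ ≤
        10 * (N : ℝ) ^ (1 - θ * (1 / 2) ^ k) := by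
  have hP : 0 < (descPochhammer ℝ (k + 1)).eval c := descPochhammer_pos (by simpa using hkc)
  have hq : (1 / 2 : ℝ) ^ k ≤ 1 := pow_le_one₀ (by norm_num) (by norm_num)
  filter_upwards [eventually_mul_pow_mul_rpow_le hP.le (by linarith) hθsmall,
    eventually_one_div_mul_rpow_le hP (by positivity : (0 : ℝ) < k + 4) hθlarge,
    eventually_ge_atTop 1] with N hsmall hlarge hN α hα hαN
  have hN1 : (1 : ℝ) ≤ N := by exact_mod_cast hN
  have hN0 : (0 : ℝ) < N := by linarith
  have hα0 : 0 < α := hα.trans_lt' (by positivity)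
  have hNθ : 1 ≤ (N : ℝ) ^ θ := one_le_rpow hN1 hθ.le
  have hθN : (N : ℝ) ^ θ ≤ N := rpow_le_self_of_one_le hN1 (by linarith)
  set H : ℕ := ⌊(N : ℝ) ^ θ⌋₊
  set M : ℕ := ⌈√(N : ℝ)⌉₊
  have hH : 0 < H := Nat.floor_pos.2 hNθ
  have hHθ : (H : ℝ) ≤ (N : ℝ) ^ θ := Nat.floor_le (by positivity)
  have hHN : H ≤ N := by exact_mod_cast hHθ.trans hθN
  have hMN : M ≤ N := Nat.ceil_le.2 (sqrt_le_iff.2 ⟨hN0.le, le_self_pow₀ hN1 two_ne_zero⟩)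
  have hM : √(N : ℝ) ≤ M + 1 := (Nat.le_ceil _).trans (by linarith)
  calc _ ≤ M + 4 * N * (H : ℝ) ^ (-(1 / 2 : ℝ) ^ k) :=
        norm_sum_Icc_fourierChar_mul_rpow_le hα0 hkc hck hH hHN hMN
          (hsmall α H (M + 1) hαN (by positivity) hHθ hM)
          (hlarge α H hα (by exact_mod_cast hH) hHθ)
    _ ≤ 10 * (N : ℝ) ^ (1 - θ * (1 / 2) ^ k) :=
        natCeil_sqrt_add_mul_natFloor_rpow_neg_le hN hθ.le (by positivity) hq (by nlinarith)

theorem exists_norm_sum_Icc_fourierChar_mul_rpow_le {c : ℝ} (hc : 0 < c)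
    (hci : ∀ z : ℤ, c ≠ z) :
    ∃ θ > (0 : ℝ), ∃ η > (0 : ℝ), ∃ C > (0 : ℝ), ∀ N : ℕ, 1 ≤ N → ∀ α : ℝ,
      (N : ℝ) ^ (-θ) ≤ α → α ≤ (N : ℝ) ^ θ →
        ‖∑ n ∈ Icc 1 N, (𝐞 (α * (n : ℝ) ^ c) : ℂ)‖ ≤ C * (N : ℝ) ^ (1 - η) := by
  set k : ℕ := ⌊c⌋₊
  have hkc : k < c := (Nat.floor_le hc.le).lt_of_ne fun h ↦ hci k (by exact_mod_cast h.symm)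
  have hck : c < k + 1 := Nat.lt_floor_add_one c
  obtain ⟨θ, hθ, hθlt⟩ := exists_between (show
    0 < min ((k + 1 - c) / (2 * (k + 1))) ((c - k) / 2) from
      lt_min (div_pos (by linarith) (by positivity)) (by linarith))
  rw [lt_min_iff, lt_div_iff₀ (by positivity)] at hθlt
  obtain ⟨N₀, hN₀⟩ := eventually_atTop.1 <|
    eventually_norm_sum_Icc_fourierChar_mul_rpow_le hkc hck hθ (by linarith) (by linarith)
  refine ⟨θ, hθ, θ * (1 / 2) ^ k, by positivity, 10 + N₀, by positivity,
    fun N hN α hα hαN ↦ ?_⟩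
  have hN1 : (1 : ℝ) ≤ N := by exact_mod_cast hN
  rcases le_total N₀ N with h | h
  · refine (hN₀ N h α hα hαN).trans ?_
    gcongr
    linarith [N₀.cast_nonneg (α := ℝ)]
  · calc _ ≤ (N : ℝ) := (norm_sum_le_of_le _ fun _ _ ↦ (Circle.norm_coe _).le).trans_eq (by simp)
      _ ≤ 10 + N₀ := by linarith [show (N : ℝ) ≤ N₀ by exact_mod_cast h]
      _ ≤ _ := le_mul_of_one_le_right (by positivity) (one_le_rpow hN1 ?_)
    have hq : (1 / 2 : ℝ) ^ k ≤ 1 := pow_le_one₀ (by norm_num) (by norm_num)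
    have hθ1 : θ ≤ 1 := by linarith
    exact sub_nonneg.2 (mul_le_one₀ hθ1 (by positivity) hq)

/-! ### From exponential sums to the sawtooth function -/

/-- The sawtooth function `ψ(x) = {x} - 1/2`, with jumps at the integers. -/
noncomputable def sawtooth (x : ℝ) : ℝ := Int.fract x - 1 / 2

lemma sawtooth_sq_le (x : ℝ) (z : ℤ) : sawtooth x ^ 2 ≤ (x - 1 / 2 - z) ^ 2 := by
  have hfloor : (x - 1 / 2 - z) = sawtooth x + (⌊x⌋ - z : ℤ) := by
    rw [sawtooth, Int.fract]
    push_cast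
    ring
  have h0 := Int.fract_nonneg x
  have h1 := Int.fract_lt_one x
  rw [hfloor, sawtooth]
  rcases lt_trichotomy (⌊x⌋ - z) 0 with h | h | h
  · have : ((⌊x⌋ - z : ℤ) : ℝ) ≤ -1 := by exact_mod_cast Int.le_sub_one_of_lt h
    nlinarith
  · simp [h]
  · have : (1 : ℝ) ≤ (⌊x⌋ - z : ℤ) := by exact_mod_cast h
    nlinarith

lemma sawtooth_add_sq_le (x t : ℝ) : sawtooth (x + t) ^ 2 ≤ (sawtooth x + t) ^ 2 := by
  convert sawtooth_sq_le (x + t) ⌊x⌋ using 2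
  rw [sawtooth, Int.fract]
  ring

lemma abs_sum_sawtooth_le {ι : Type*} {s : Finset ι} {x : ι → ℝ} {D E : ℝ} (hD : 0 < D)
    (hE : ∀ β, |∑ i ∈ s, (sawtooth (x i - β) ^ 2 - 1 / 12)| ≤ E) (β : ℝ) :
    |∑ i ∈ s, sawtooth (x i - β)| ≤ E / D + #s * D / 2 := by
  have hshift : ∀ t, 0 ≤ 2 * E + 2 * t * ∑ i ∈ s, sawtooth (x i - β) + #s * t ^ 2 := by
    intro t
    have hsum : ∑ i ∈ s, (sawtooth (x i - (β - t)) ^ 2 - 1 / 12) ≤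
        ∑ i ∈ s, (sawtooth (x i - β) ^ 2 - 1 / 12) +
          2 * t * ∑ i ∈ s, sawtooth (x i - β) + #s * t ^ 2 := by
      rw [mul_sum, ← nsmul_eq_mul, ← sum_const, ← sum_add_distrib, ← sum_add_distrib]
      refine sum_le_sum fun i _ ↦ ?_
      have := sawtooth_add_sq_le (x i - β) t
      rw [sub_add] at this
      linarith
    linarith [(abs_le.1 (hE β)).2, (abs_le.1 (hE (β - t))).1]
  have hbound : E / D + #s * D / 2 = (2 * E + #s * D ^ 2) / (2 * D) := by field_simp
  rw [hbound, abs_le, ← neg_div, div_le_iff₀ (by positivity), le_div_iff₀ (by positivity)]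
  constructor <;> linarith [hshift D, hshift (-D)]

lemma hasSum_cos_sawtooth (x : ℝ) :
    HasSum (fun h : ℕ ↦ 1 / (h : ℝ) ^ 2 * cos (2 * π * h * x))
      (π ^ 2 * (sawtooth x ^ 2 - 1 / 12)) := by
  have hfract : Int.fract x ∈ Set.Icc (0 : ℝ) 1 :=
    ⟨Int.fract_nonneg x, (Int.fract_lt_one x).le⟩
  convert! hasSum_one_div_nat_pow_mul_cos one_ne_zero hfract using 1
  · ext h
    rw [Int.fract, mul_sub, show 2 * π * h * (⌊x⌋ : ℝ) = (h * ⌊x⌋ : ℤ) * (2 * π) by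
      push_cast; ring, cos_sub_int_mul_two_pi, mul_one]
  · change _ = _ * bernoulliFun 2 _
    rw [bernoulliFun_two, sawtooth]
    norm_num [Nat.factorial]
    ring

lemma abs_sum_cos_le_norm_sum_fourierChar {ι : Type*} (s : Finset ι) (x : ι → ℝ) (h β : ℝ) :
    |∑ i ∈ s, cos (2 * π * h * (x i - β))| ≤ ‖∑ i ∈ s, (𝐞 (h * x i) : ℂ)‖ := by
  have hre : ∑ i ∈ s, cos (2 * π * h * (x i - β)) =
      ((𝐞 (-(h * β)) : ℂ) * ∑ i ∈ s, (𝐞 (h * x i) : ℂ)).re := by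
    rw [mul_sum, Complex.re_sum]
    refine sum_congr rfl fun i _ ↦ ?_
    rw [← Circle.coe_mul, ← AddChar.map_add_eq_mul, fourierChar_apply,
      Complex.exp_ofReal_mul_I_re]
    ring_nf
  rw [hre]
  refine (Complex.abs_re_le_norm _).trans_eq ?_
  rw [norm_mul, Circle.norm_coe, one_mul]

theorem abs_sum_sawtooth_sq_sub_le {ι : Type*} {s : Finset ι} {x : ι → ℝ} {B K : ℝ}
    (hK : 1 ≤ K)
    (hB : ∀ h : ℕ, 1 ≤ h → h ≤ K → ‖∑ i ∈ s, (𝐞 (h * x i) : ℂ)‖ ≤ B) (β : ℝ) :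
    |∑ i ∈ s, (sawtooth (x i - β) ^ 2 - 1 / 12)| ≤
      (B + #s / √K) * ∑' h : ℕ, 1 / (h : ℝ) ^ (3 / 2 : ℝ) := by
  have hB0 : 0 ≤ B := (norm_nonneg _).trans (hB 1 le_rfl (by simpa using hK))
  have hcos : ∀ h : ℕ, 1 ≤ h →
      |∑ i ∈ s, cos (2 * π * h * (x i - β))| ≤ (B + #s / √K) * √h := by
    intro h hh
    refine (abs_sum_cos_le_norm_sum_fourierChar s x h β).trans ?_
    rcases le_or_gt (h : ℝ) K with hhK | hhK
    · calc _ ≤ B := hB h hh hhK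
        _ ≤ B + #s / √K := le_add_of_nonneg_right (by positivity)
        _ ≤ _ := le_mul_of_one_le_right (by positivity) (one_le_sqrt.2 (by exact_mod_cast hh))
    · calc _ ≤ (#s : ℝ) :=
            (norm_sum_le_of_le _ fun _ _ ↦ (Circle.norm_coe _).le).trans_eq (by simp)
        _ = #s / √K * √K := (div_mul_cancel₀ _ (by positivity)).symm
        _ ≤ (B + #s / √K) * √h := by
            gcongr
            exact le_add_of_nonneg_left hB0
  have hterm : ∀ h : ℕ, ‖∑ i ∈ s, 1 / (h : ℝ) ^ 2 * cos (2 * π * h * (x i - β))‖ ≤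
      (B + #s / √K) * (1 / (h : ℝ) ^ (3 / 2 : ℝ)) := by
    intro h
    rcases h.eq_zero_or_pos with rfl | hh
    · simp
    have hh0 : (0 : ℝ) < h := by exact_mod_cast hh
    have hpow : (h : ℝ) ^ 2 = (h : ℝ) ^ (3 / 2 : ℝ) * √h := by
      rw [sqrt_eq_rpow, ← rpow_add hh0, ← rpow_natCast]
      norm_num
    rw [← mul_sum, norm_mul, norm_eq_abs, norm_eq_abs, abs_of_pos (by positivity)]
    calc _ ≤ 1 / (h : ℝ) ^ 2 * ((B + #s / √K) * √h) := by
          gcongr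
          exact hcos h hh
      _ = _ := by
          rw [hpow]
          field_simp
  have hsum := (hasSum_sum fun i (_ : i ∈ s) ↦ hasSum_cos_sawtooth (x i - β)).norm_le_of_bounded
    ((summable_one_div_nat_rpow.2 (by norm_num)).hasSum.mul_left _) hterm
  rw [← mul_sum, norm_mul, norm_eq_abs, norm_eq_abs, abs_of_pos (by positivity)] at hsum
  exact (le_mul_of_one_le_left (abs_nonneg _) (one_le_pow₀ (by linarith [pi_gt_three]))).trans hsum

/-! ### Counting residues -/

lemma int_ediv_sub_sub_one_ediv (a : ℤ) {m : ℤ} (hm : 0 < m) :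
    a / m - (a - 1) / m = if m ∣ a then 1 else 0 := by
  split_ifs with h
  · obtain ⟨q, rfl⟩ := h
    have hpred : (m * q - 1) / m = q - 1 := by
      rw [Int.ediv_eq_iff_of_pos hm]
      constructor <;> linarith
    rw [Int.mul_ediv_cancel_left _ hm.ne', hpred, sub_sub_cancel]
  · have hpred : (a - 1) / m = a / m := by
      rw [Int.ediv_eq_iff_of_pos hm]
      have := Int.emod_pos_of_not_dvd h
      have := Int.emod_lt_of_pos a hm
      grind [Int.mul_ediv_add_emod a m]
    rw [hpred, sub_self]

lemma ite_floor_modEq_eq {m : ℕ} (hm : 0 < m) (X : ℝ) (u : ℤ) :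
    (if ⌊X⌋ ≡ u [ZMOD m] then (1 : ℝ) else 0) =
      1 / m + sawtooth (X / m - (u + 1 : ℤ) / m) - sawtooth (X / m - u / m) := by
  have hfloor : ∀ v : ℤ, ⌊X / m - (v : ℝ) / m⌋ = (⌊X⌋ - v) / m := fun v ↦ by
    rw [← sub_div, Int.floor_div_natCast, Int.floor_sub_intCast]
  have hjump : (if ⌊X⌋ ≡ u [ZMOD m] then (1 : ℝ) else 0) =
      ((⌊X⌋ - u) / m : ℤ) - ((⌊X⌋ - (u + 1)) / m : ℤ) := by
    simp only [show ⌊X⌋ ≡ u [ZMOD m] ↔ (m : ℤ) ∣ ⌊X⌋ - u from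
      Int.modEq_comm.trans Int.modEq_iff_dvd]
    have := int_ediv_sub_sub_one_ediv (⌊X⌋ - u) (m := m) (by exact_mod_cast hm)
    rw [sub_sub] at this
    exact_mod_cast this.symm
  rw [hjump, sawtooth, sawtooth, Int.fract, Int.fract, hfloor, hfloor]
  push_cast
  ring

lemma abs_card_floor_modEq_sub_le {ι : Type*} {s : Finset ι} {X : ι → ℝ} {m : ℕ} (hm : 0 < m)
    {E : ℝ} (hE : ∀ β, |∑ i ∈ s, sawtooth (X i / m - β)| ≤ E) (u : ℤ) :
    |(#{i ∈ s | ⌊X i⌋ ≡ u [ZMOD m]} : ℝ) - #s / m| ≤ 2 * E := by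
  have hcard : (#{i ∈ s | ⌊X i⌋ ≡ u [ZMOD m]} : ℝ) - #s / m =
      ∑ i ∈ s, sawtooth (X i / m - (u + 1 : ℤ) / m) - ∑ i ∈ s, sawtooth (X i / m - u / m) := by
    rw [natCast_card_filter, sum_congr rfl fun i _ ↦ ite_floor_modEq_eq hm (X i) u,
      sum_sub_distrib, sum_add_distrib, sum_const, nsmul_eq_mul]
    ring
  rw [hcard, two_mul]
  exact (abs_sub _ _).trans (add_le_add (hE _) (hE _))

/-! ### Equidistribution of `⌊n ^ c⌋` -/

lemma exists_abs_sum_sawtooth_sq_sub_le {c : ℝ} (hc : 0 < c) (hci : ∀ z : ℤ, c ≠ z) :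
    ∃ θ > (0 : ℝ), ∃ η > (0 : ℝ), ∃ C > (0 : ℝ), ∀ N m : ℕ, 1 ≤ N → 1 ≤ m →
      (m : ℝ) ≤ (N : ℝ) ^ θ → ∀ β : ℝ,
        |∑ n ∈ Icc 1 N, (sawtooth ((n : ℝ) ^ c / m - β) ^ 2 - 1 / 12)| ≤
          C * (N : ℝ) ^ (1 - η) := by
  obtain ⟨θ, hθ, η, hη, C, hC, hexp⟩ := exists_norm_sum_Icc_fourierChar_mul_rpow_le hc hci
  set T : ℝ := ∑' h : ℕ, 1 / (h : ℝ) ^ (3 / 2 : ℝ)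
  have : 0 ≤ T := tsum_nonneg fun h ↦ by positivity
  refine ⟨θ, hθ, min η (θ / 2), by positivity, (C + 1) * (T + 1), by positivity,
    fun N m hN hm hmN β ↦ ?_⟩
  have hN1 : (1 : ℝ) ≤ N := by exact_mod_cast hN
  have hN0 : (0 : ℝ) < N := by linarith
  have : (0 : ℝ) < m := by exact_mod_cast hm
  have hm1 : (1 : ℝ) ≤ m := by exact_mod_cast hm
  have hB : ∀ h : ℕ, 1 ≤ h → h ≤ (N : ℝ) ^ θ →
      ‖∑ n ∈ Icc 1 N, (𝐞 (h * ((n : ℝ) ^ c / m)) : ℂ)‖ ≤ C * (N : ℝ) ^ (1 - η) := by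
    intro h hh hhN
    have hh1 : (1 : ℝ) ≤ h := by exact_mod_cast hh
    simp only [mul_div_left_comm (h : ℝ), mul_comm _ ((h : ℝ) / m)]
    refine hexp N hN _ ?_ ((div_le_self (by positivity) hm1).trans hhN)
    rw [rpow_neg hN0.le, ← one_div]
    gcongr
  have htrunc : N / √((N : ℝ) ^ θ) = (N : ℝ) ^ (1 - θ / 2) := by
    rw [sqrt_eq_rpow, ← rpow_mul hN0.le, rpow_sub hN0, rpow_one, mul_one_div]
  calc _ ≤ (C * (N : ℝ) ^ (1 - η) + N / √((N : ℝ) ^ θ)) * T := by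
        simpa only [Nat.card_Icc, add_tsub_cancel_right] using
          abs_sum_sawtooth_sq_sub_le (one_le_rpow hN1 hθ.le) hB β
    _ ≤ (C * (N : ℝ) ^ (1 - min η (θ / 2)) + (N : ℝ) ^ (1 - min η (θ / 2))) * (T + 1) := by
        rw [htrunc]
        gcongr
        · exact min_le_left _ _
        · exact min_le_right _ _
        · linarith
    _ = _ := by ring

theorem exists_abs_sum_sawtooth_le {c : ℝ} (hc : 0 < c) (hci : ∀ z : ℤ, c ≠ z) :
    ∃ θ > (0 : ℝ), ∃ η > (0 : ℝ), ∃ C > (0 : ℝ), ∀ N m : ℕ, 1 ≤ N → 1 ≤ m →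
      (m : ℝ) ≤ (N : ℝ) ^ θ → ∀ β : ℝ,
        |∑ n ∈ Icc 1 N, sawtooth ((n : ℝ) ^ c / m - β)| ≤ C * (N : ℝ) ^ (1 - η) := by
  obtain ⟨θ, hθ, η, hη, C, hC, hsq⟩ := exists_abs_sum_sawtooth_sq_sub_le hc hci
  refine ⟨θ, hθ, η / 2, by positivity, C + 1 / 2, by positivity, fun N m hN hm hmN β ↦ ?_⟩
  have hN0 : (0 : ℝ) < N := by exact_mod_cast hN
  calc _ ≤ C * (N : ℝ) ^ (1 - η) / (N : ℝ) ^ (-(η / 2)) + N * (N : ℝ) ^ (-(η / 2)) / 2 := by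
        simpa only [Nat.card_Icc, add_tsub_cancel_right] using
          abs_sum_sawtooth_le (D := (N : ℝ) ^ (-(η / 2))) (by positivity) (hsq N m hN hm hmN) β
    _ = C * (N : ℝ) ^ (1 - η / 2) + (N : ℝ) ^ (1 - η / 2) / 2 := by
        have hone : N * (N : ℝ) ^ (-(η / 2)) = (N : ℝ) ^ (1 - η / 2) := by
          rw [sub_eq_add_neg, rpow_add hN0, rpow_one]
        rw [hone, mul_div_assoc, ← rpow_sub hN0, show 1 - η - -(η / 2) = 1 - η / 2 by ring]
    _ = (C + 1 / 2) * (N : ℝ) ^ (1 - η / 2) := by ring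

lemma rpow_one_sub_le_div_rpow {x y θ δ η : ℝ} (hx : 1 ≤ x) (hy : 0 < y) (hyx : y ≤ x ^ θ)
    (hθ : 0 ≤ θ) (hδ₀ : 0 ≤ δ) (hδ₁ : δ ≤ 1) (hη : θ + δ ≤ η) :
    x ^ (1 - η) ≤ (x / y) ^ (1 - δ) := by
  have hx0 : 0 < x := by linarith
  calc x ^ (1 - η) ≤ x ^ ((1 - θ) * (1 - δ)) := rpow_le_rpow_of_exponent_le hx (by nlinarith)
    _ = (x / x ^ θ) ^ (1 - δ) := by rw [rpow_mul hx0.le, rpow_sub hx0, rpow_one]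
    _ ≤ (x / y) ^ (1 - δ) := by gcongr

theorem stmt_9_general (c : ℝ) (hc : 0 < c) (hci : ∀ z : ℤ, c ≠ z) :
    ∃ θ > (0 : ℝ), ∃ δ > (0 : ℝ), ∃ C > (0 : ℝ),
      ∀ N m : ℕ, ∀ u : ℤ, 1 ≤ N → 1 ≤ m → (m : ℝ) ≤ (N : ℝ) ^ θ →
        0 ≤ u → u < m →
        |(((Finset.Icc 1 N).filter
            (fun n : ℕ => ⌊((n : ℝ)) ^ c⌋ % (m : ℤ) = u)).card : ℝ) - (N : ℝ) / m| ≤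
          C * ((N : ℝ) / m) ^ (1 - δ) := by
  obtain ⟨θ, hθ, η, hη, C, hC, hsaw⟩ := exists_abs_sum_sawtooth_le hc hci
  refine ⟨min θ (η / 2), by positivity, min (η / 2) 1, by positivity, 2 * C, by positivity,
    fun N m u hN hm hmN hu0 hum ↦ ?_⟩
  have hN1 : (1 : ℝ) ≤ N := by exact_mod_cast hN
  have hm0 : (0 : ℝ) < m := by exact_mod_cast hm
  have hmθ : (m : ℝ) ≤ (N : ℝ) ^ θ :=
    hmN.trans (rpow_le_rpow_of_exponent_le hN1 (min_le_left _ _))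
  have hcount := abs_card_floor_modEq_sub_le (Nat.zero_lt_of_lt hm) (hsaw N m hN hm hmθ) u
  simp only [Int.ModEq, Int.emod_eq_of_lt hu0 hum, Nat.card_Icc, add_tsub_cancel_right] at hcount
  refine hcount.trans ?_
  rw [← mul_assoc]
  gcongr
  exact rpow_one_sub_le_div_rpow hN1 hm0 hmN (by positivity) (by positivity) (min_le_right _ _)
    (by linarith [min_le_right θ (η / 2), min_le_left (η / 2) 1])

theorem stmt_9 (c : ℝ) (hc : 1 < c) (hci : ∀ z : ℤ, c ≠ z) :
    ∃ θ > (0 : ℝ), ∃ δ > (0 : ℝ), ∃ C > (0 : ℝ),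
      ∀ N m : ℕ, ∀ u : ℤ, 1 ≤ N → 1 ≤ m → (m : ℝ) ≤ (N : ℝ) ^ θ →
        0 ≤ u → u < m →
        |(((Finset.Icc 1 N).filter
            (fun n : ℕ => ⌊((n : ℝ)) ^ c⌋ % (m : ℤ) = u)).card : ℝ) - (N : ℝ) / m| ≤
          C * ((N : ℝ) / m) ^ (1 - δ) :=
  stmt_9_general c (by linarith) hci
end
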